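/- arXiv:1008.0144 — 3 statements merged into one kernel-verified Lean document; each statement's English description precedes it below -/
import Mathlib

section
/- Let ν > −1 and let j > 0 be a zero of the Bessel function J_ν, i.e. J_ν(j) = 0. Then for every complex number z with z² ≠ j²: ∫₀¹ u · J_ν(zu) · J_ν(ju) du = (j/(j² − z²)) · J_ν(z) · J_{ν+1}(j). -/
open MeasureTheory intervalIntegral

/-- The Bessel function of the first kind `J_ν(z)` for complex `z`
(principal branch of `z^ν`). -/
noncomputable def besselJC (ν : ℝ) (z : ℂ) : ℂ :=
  ∑' n : ℕ, ((-1 : ℂ) ^ n / (Complex.Gamma ((n : ℂ) + 1) * Complex.Gamma ((n : ℂ) + 1 + ν))) *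
    (z / 2) ^ ((2 * (n : ℂ) + ν) : ℂ)

noncomputable def bcoef (ν : ℝ) (n : ℕ) : ℂ :=
  (-1 : ℂ) ^ n / (Complex.Gamma ((n : ℂ) + 1) * Complex.Gamma ((n : ℂ) + 1 + ν))

noncomputable def bE (ν : ℝ) (x : ℂ) : ℂ := ∑' n : ℕ, bcoef ν n * x ^ n

lemma bgamma_ne (ν : ℝ) (hν : -1 < ν) (n : ℕ) : Complex.Gamma ((n : ℂ) + 1 + ν) ≠ 0 := by
  apply Complex.Gamma_ne_zero_of_re_pos
  simp
  have : (0 : ℝ) ≤ n := n.cast_nonneg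
  linarith

lemma bfac_ne (n : ℕ) : Complex.Gamma ((n : ℂ) + 1) ≠ 0 := by
  simpa using bgamma_ne 0 (by norm_num) n

lemma badd_ne (ν : ℝ) (hν : -1 < ν) (n : ℕ) : (n : ℂ) + 1 + ν ≠ 0 := by
  intro h
  have h2 := congrArg Complex.re h
  simp at h2
  have : (0 : ℝ) ≤ n := n.cast_nonneg
  linarith

lemma bcoef_succ (ν : ℝ) (hν : -1 < ν) (n : ℕ) :
    ((n : ℂ) + 1) * bcoef ν (n + 1) = - bcoef (ν + 1) n := by
  unfold bcoef
  have h1 : Complex.Gamma (((n + 1 : ℕ) : ℂ) + 1) = ((n : ℂ) + 1) * Complex.Gamma ((n : ℂ) + 1) := by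
    push_cast
    exact Complex.Gamma_add_one _ (Nat.cast_add_one_ne_zero n)
  have h2 : ((n + 1 : ℕ) : ℂ) + 1 + ν = (n : ℂ) + 1 + ((ν + 1 : ℝ) : ℂ) := by push_cast; ring
  rw [h1, h2]
  have h3 := bgamma_ne (ν + 1) (by linarith) n
  have h4 := bfac_ne n
  have h5 : (n : ℂ) + 1 ≠ 0 := Nat.cast_add_one_ne_zero n
  field_simp
  ring

lemma bcoef_nu (ν : ℝ) (hν : -1 < ν) (n : ℕ) :
    bcoef ν n = ((n : ℂ) + 1 + ν) * bcoef (ν + 1) n := by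
  unfold bcoef
  have h2 : (n : ℂ) + 1 + ((ν + 1 : ℝ) : ℂ) = ((n : ℂ) + 1 + ν) + 1 := by push_cast; ring
  rw [h2, Complex.Gamma_add_one _ (badd_ne ν hν n)]
  have h3 := bgamma_ne ν hν n
  have h4 := bfac_ne n
  have h5 := badd_ne ν hν n
  field_simp

lemma bcoef_ne (ν : ℝ) (hν : -1 < ν) (n : ℕ) : bcoef ν n ≠ 0 := by
  unfold bcoef
  exact div_ne_zero (by simp) (mul_ne_zero (bfac_ne n) (bgamma_ne ν hν n))

lemma bcoef_bound (ν : ℝ) (hν : -1 < ν) (n : ℕ) :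
    ‖bcoef ν (n + 1)‖ ≤ ‖bcoef ν n‖ * (1 / (((n : ℝ) + 1) * (1 + ν))) := by
  have hn : (0 : ℝ) ≤ n := n.cast_nonneg
  have h1 := congrArg norm (bcoef_succ ν hν n)
  have h2 := congrArg norm (bcoef_nu ν hν n)
  rw [norm_mul] at h1 h2
  rw [norm_neg] at h1
  have e1 : ‖(n : ℂ) + 1‖ = (n : ℝ) + 1 := by
    rw [show (n : ℂ) + 1 = (((n : ℝ) + 1 : ℝ) : ℂ) by push_cast; rfl, Complex.norm_real,
      Real.norm_of_nonneg (by positivity)]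
  have e2 : ‖(n : ℂ) + 1 + ν‖ = (n : ℝ) + 1 + ν := by
    rw [show (n : ℂ) + 1 + ν = (((n : ℝ) + 1 + ν : ℝ) : ℂ) by push_cast; rfl, Complex.norm_real,
      Real.norm_of_nonneg (by linarith)]
  rw [e1] at h1
  rw [e2, ← h1] at h2
  have h3 : 0 < 1 + ν := by linarith
  rw [mul_one_div, le_div_iff₀ (by positivity), h2]
  have : 0 ≤ ‖bcoef ν (n + 1)‖ := norm_nonneg _
  nlinarith [mul_nonneg (mul_nonneg this (by positivity : (0:ℝ) ≤ n + 1)) hn]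

lemma bsummable_norm (ν : ℝ) (hν : -1 < ν) (r : ℝ) (hr : 0 ≤ r) :
    Summable fun n => ‖bcoef ν n‖ * r ^ n := by
  have h3 : 0 < 1 + ν := by linarith
  have ht : Filter.Tendsto (fun n : ℕ => (1 / ((n : ℝ) + 1)) * (r / (1 + ν))) Filter.atTop (nhds 0) := by
    simpa using tendsto_one_div_add_atTop_nhds_zero_nat.mul_const (r / (1 + ν))
  have hev := ht.eventually (Iio_mem_nhds (show (0 : ℝ) < 1 / 2 by norm_num))
  refine summable_of_ratio_norm_eventually_le (r := 1 / 2) (by norm_num) ?_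
  filter_upwards [hev] with n hn
  have hn : (1 / ((n : ℝ) + 1)) * (r / (1 + ν)) < 1 / 2 := hn
  rw [Real.norm_of_nonneg (by positivity), Real.norm_of_nonneg (by positivity)]
  have hb := bcoef_bound ν hν n
  calc ‖bcoef ν (n + 1)‖ * r ^ (n + 1)
      ≤ (‖bcoef ν n‖ * (1 / (((n : ℝ) + 1) * (1 + ν)))) * r ^ (n + 1) := by gcongr
    _ = ((1 / ((n : ℝ) + 1)) * (r / (1 + ν))) * (‖bcoef ν n‖ * r ^ n) := by
        field_simp
        ring
    _ ≤ 1 / 2 * (‖bcoef ν n‖ * r ^ n) := by gcongr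

lemma bsummable (ν : ℝ) (hν : -1 < ν) (x : ℂ) : Summable fun n => bcoef ν n * x ^ n := by
  apply Summable.of_norm
  simpa [norm_mul, norm_pow] using bsummable_norm ν hν ‖x‖ (norm_nonneg _)

lemma bE_hasDerivAt (ν : ℝ) (hν : -1 < ν) (x : ℂ) : HasDerivAt (bE ν) (- bE (ν + 1) x) x := by
  set r := ‖x‖ + 1
  have hr : 0 ≤ r := by positivity
  have hu : Summable fun n : ℕ => ‖bcoef ν n * n‖ * r ^ (n - 1) := by
    rw [← summable_nat_add_iff 1]
    refine (bsummable_norm (ν + 1) (by linarith) r hr).congr fun n => ?_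
    have := bcoef_succ ν hν n
    push_cast
    rw [mul_comm (bcoef ν (n + 1)), this, norm_neg]
    try simp
  have key := hasDerivAt_tsum_of_isPreconnected (t := Metric.ball (0 : ℂ) r)
    (g := fun n y => bcoef ν n * y ^ n) (g' := fun n y => bcoef ν n * ((n : ℂ) * y ^ (n - 1)))
    (y₀ := 0) (y := x) hu Metric.isOpen_ball (convex_ball _ _).isPreconnected
    (fun n y _ => (hasDerivAt_pow n y).const_mul _) ?_ (by simp [r]; positivity)
    (bsummable ν hν 0) (by simp [r])
  · refine HasDerivAt.congr_deriv (f := bE ν) key (Eq.symm ?_)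
    have hs : Summable fun n : ℕ => bcoef ν n * ((n : ℂ) * x ^ (n - 1)) := by
      refine Summable.of_norm_bounded hu fun n => ?_
      rw [← mul_assoc, norm_mul _ (x ^ (n - 1)), norm_pow]
      gcongr
      simp [r]
    rw [hs.tsum_eq_zero_add]
    simp only [bE, Nat.cast_zero, zero_mul, mul_zero, zero_add]
    rw [← tsum_neg]
    congr 1
    ext n
    have := bcoef_succ ν hν n
    rw [← neg_mul, ← this]
    push_cast
    try simp
    ring
  · intro n y hy
    rw [← mul_assoc, norm_mul _ (y ^ (n - 1)), norm_pow]
    gcongr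
    simp at hy
    exact hy.le

lemma bE_rec (ν : ℝ) (hν : -1 < ν) (x : ℂ) :
    bE ν x = (ν + 1) * bE (ν + 1) x - x * bE (ν + 1 + 1) x := by
  have h1 := (bsummable (ν + 1) (by linarith) x)
  have h2 := (bsummable (ν + 1 + 1) (by linarith) x)
  have h0 := (bsummable ν hν x)
  unfold bE
  rw [h0.tsum_eq_zero_add, h1.tsum_eq_zero_add, mul_add, ← tsum_mul_left, ← tsum_mul_left,
    add_sub_assoc, ← Summable.tsum_sub]
  · congr 1
    · rw [bcoef_nu ν hν, Nat.cast_zero, pow_zero]; ring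
    · congr 1
      ext n
      rw [bcoef_nu ν hν]
      have := bcoef_succ (ν + 1) (by linarith) n
      rw [← neg_eq_iff_eq_neg] at this
      rw [← this]
      push_cast
      ring
  · exact ((summable_nat_add_iff 1).2 h1).mul_left _
  · exact h2.mul_left _

lemma bessel_eq (ν : ℝ) (hν : -1 < ν) (w : ℂ) :
    besselJC ν w = (w / 2) ^ (ν : ℂ) * bE ν (w ^ 2 / 4) := by
  unfold besselJC bE
  rw [← tsum_mul_left]
  congr 1
  ext n
  rw [← bcoef]
  rcases eq_or_ne w 0 with rfl | hw
  · rcases n with _ | n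
    · simp; ring
    · have : (2 * ((n + 1 : ℕ) : ℂ) + ν) ≠ 0 := by
        intro h
        have h2 := congrArg Complex.re h
        simp at h2
        have : (0 : ℝ) ≤ n := n.cast_nonneg
        linarith
      rw [zero_div, Complex.zero_cpow this]
      simp
  · rw [Complex.cpow_add _ _ (by simpa using hw),
      show (2 * (n : ℂ)) = ((2 * n : ℕ) : ℂ) by push_cast; rfl, Complex.cpow_natCast, pow_mul]
    rw [div_pow]
    norm_num
    ring

lemma bpow_deriv (ν : ℝ) (hν : -1 < ν) (b : ℂ) (u : ℝ) (hu : 0 < u) :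
    HasDerivAt (fun u : ℝ => (((u ^ (2 * ν + 2) : ℝ)) : ℂ) * bE (ν + 1) (b * (u : ℂ) ^ 2))
      (2 * ((u ^ (2 * ν + 1) : ℝ) : ℂ) * bE ν (b * (u : ℂ) ^ 2)) u := by
  have h1 : HasDerivAt (fun u : ℝ => (((u ^ (2 * ν + 2) : ℝ)) : ℂ))
      (((2 * ν + 2) * u ^ (2 * ν + 2 - 1) : ℝ) : ℂ) u :=
    (Real.hasDerivAt_rpow_const (Or.inl hu.ne')).ofReal_comp
  have h2 : HasDerivAt (fun u : ℝ => b * (u : ℂ) ^ 2) (b * (2 * (u : ℂ))) u := by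
    have := ((hasDerivAt_pow 2 (u : ℂ)).const_mul b).comp_ofReal
    simpa using this
  have h3 := (bE_hasDerivAt (ν + 1) (by linarith) (b * (u : ℂ) ^ 2)).comp u h2
  refine HasDerivAt.congr_deriv (h1.mul h3) (Eq.symm ?_)
  rw [bE_rec ν hν]
  have e1 : 2 * ν + 2 - 1 = 2 * ν + 1 := by ring
  have e2 : u ^ (2 * ν + 2) = u ^ (2 * ν + 1) * u := by
    rw [← Real.rpow_add_one hu.ne']; ring_nf
  rw [e1, e2]
  try simp only [Function.comp]
  push_cast
  ring

lemma bE_deriv (ν : ℝ) (hν : -1 < ν) (b : ℂ) (u : ℝ) :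
    HasDerivAt (fun u : ℝ => bE ν (b * (u : ℂ) ^ 2))
      (-2 * b * u * bE (ν + 1) (b * (u : ℂ) ^ 2)) u := by
  have h2 : HasDerivAt (fun u : ℝ => b * (u : ℂ) ^ 2) (b * (2 * (u : ℂ))) u := by
    have := ((hasDerivAt_pow 2 (u : ℂ)).const_mul b).comp_ofReal
    simpa using this
  have h3 := (bE_hasDerivAt ν hν (b * (u : ℂ) ^ 2)).comp u h2
  refine HasDerivAt.congr_deriv h3 (Eq.symm ?_)
  ring

lemma bE_cont (ν : ℝ) (hν : -1 < ν) (b : ℂ) :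
    Continuous (fun u : ℝ => bE ν (b * (u : ℂ) ^ 2)) :=
  continuous_iff_continuousAt.2 fun u => (bE_deriv ν hν b u).continuousAt

lemma bint (ν : ℝ) (hν : -1 < ν) (a b : ℂ) :
    ∫ u in (0 : ℝ)..1, 2 * (b - a) * (((u ^ (2 * ν + 1) : ℝ) : ℂ) *
      (bE ν (a * (u : ℂ) ^ 2) * bE ν (b * (u : ℂ) ^ 2)))
    = b * (bE ν a * bE (ν + 1) b) - a * (bE (ν + 1) a * bE ν b) := by
  have hν1 : -1 < ν + 1 := by linarith
  have hc : Continuous fun u : ℝ => ((u ^ (2 * ν + 2) : ℝ) : ℂ) :=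
    Complex.continuous_ofReal.comp (Real.continuous_rpow_const (by linarith))
  have key := integral_eq_sub_of_hasDerivAt_of_le (a := 0) (b := 1) zero_le_one
    (f := fun u : ℝ =>
      b * (bE ν (a * (u : ℂ) ^ 2) * (((u ^ (2 * ν + 2) : ℝ) : ℂ) * bE (ν + 1) (b * (u : ℂ) ^ 2)))
      - a * ((((u ^ (2 * ν + 2) : ℝ) : ℂ) * bE (ν + 1) (a * (u : ℂ) ^ 2)) * bE ν (b * (u : ℂ) ^ 2)))
    (f' := fun u : ℝ => 2 * (b - a) * (((u ^ (2 * ν + 1) : ℝ) : ℂ) *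
      (bE ν (a * (u : ℂ) ^ 2) * bE ν (b * (u : ℂ) ^ 2)))) ?_ ?_ ?_
  · rw [key]
    have : (0 : ℝ) ^ (2 * ν + 2) = 0 := Real.zero_rpow (by linarith)
    simp [this]
  · have := bE_cont ν hν a
    have := bE_cont ν hν b
    have := bE_cont (ν + 1) hν1 a
    have := bE_cont (ν + 1) hν1 b
    apply Continuous.continuousOn
    fun_prop
  · intro u hu
    have hu : 0 < u := hu.1
    refine HasDerivAt.congr_deriv ((((bE_deriv ν hν a u).mul (bpow_deriv ν hν b u hu)).const_mul b).sub
      (((bpow_deriv ν hν a u hu).mul (bE_deriv ν hν b u)).const_mul a)) (Eq.symm ?_)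
    ring
  · apply IntervalIntegrable.const_mul
    apply IntervalIntegrable.mul_continuousOn
    · have h := intervalIntegrable_rpow' (a := 0) (b := 1) (r := 2 * ν + 1) (by linarith)
      exact ⟨h.1.ofReal, h.2.ofReal⟩
    · exact ((bE_cont ν hν a).mul (bE_cont ν hν b)).continuousOn

/-- If `j > 0` is a zero of `J_ν`, then for every complex `z` with `z² ≠ j²`:
`∫₀¹ u J_ν(zu) J_ν(ju) du = (j/(j² − z²)) J_ν(z) J_{ν+1}(j)`. -/
theorem bessel_zero_integral
    (ν : ℝ) (hν : -1 < ν) (j : ℝ) (hj : 0 < j) (hjz : besselJC ν (j : ℂ) = 0)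
    (z : ℂ) (hz : z ^ 2 ≠ (j : ℂ) ^ 2) :
    ∫ u in (0 : ℝ)..1, (u : ℂ) * besselJC ν (z * (u : ℂ)) * besselJC ν ((j : ℂ) * (u : ℂ))
      = ((j : ℂ) / ((j : ℂ) ^ 2 - z ^ 2)) * besselJC ν z * besselJC (ν + 1) (j : ℂ) := by
  have hj2 : ((j : ℂ) / 2) ≠ 0 := by
    simpa using hj.ne'
  have hd : (j : ℂ) ^ 2 - z ^ 2 ≠ 0 := sub_ne_zero.2 hz.symm
  have hE : bE ν ((j : ℂ) ^ 2 / 4) = 0 := by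
    rw [bessel_eq ν hν] at hjz
    rcases mul_eq_zero.1 hjz with h | h
    · exact absurd h (by simp [Complex.cpow_eq_zero_iff, hj.ne'])
    · exact h
  have hmul : ∀ (w : ℂ) (u : ℝ), 0 < u →
      besselJC ν (w * u) = (w / 2) ^ (ν : ℂ) * ((u ^ ν : ℝ) : ℂ) * bE ν (w ^ 2 / 4 * (u : ℂ) ^ 2) := by
    intro w u hu
    rw [bessel_eq ν hν]
    have h1 : (w * u / 2) ^ (ν : ℂ) = (w / 2) ^ (ν : ℂ) * ((u ^ ν : ℝ) : ℂ) := by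
      rcases eq_or_ne w 0 with rfl | hw
      · rcases eq_or_ne ν 0 with rfl | h0
        · simp
        · simp [h0]
      · have hu0 : (u : ℂ) ≠ 0 := by exact_mod_cast hu.ne'
        rw [show w * u / 2 = (u : ℂ) * (w / 2) by ring, Complex.ofReal_cpow hu.le,
          Complex.cpow_def_of_ne_zero (mul_ne_zero hu0 (by simpa using hw)),
          Complex.cpow_def_of_ne_zero hu0, Complex.cpow_def_of_ne_zero (by simpa using hw),
          Complex.log_ofReal_mul hu (by simpa using hw), ← Complex.exp_add, Complex.ofReal_log hu.le]
        ring_nf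
    rw [h1]
    congr 2
    ring
  have key := bint ν hν (z ^ 2 / 4) ((j : ℂ) ^ 2 / 4)
  rw [hE, mul_zero, mul_zero, sub_zero, intervalIntegral.integral_const_mul] at key
  have hI : ∫ u in (0 : ℝ)..1, (u : ℂ) * besselJC ν (z * (u : ℂ)) * besselJC ν ((j : ℂ) * (u : ℂ))
      = ∫ u in (0 : ℝ)..1, ((z / 2) ^ (ν : ℂ) * ((j : ℂ) / 2) ^ (ν : ℂ)) * (((u ^ (2 * ν + 1) : ℝ) : ℂ) *
      (bE ν (z ^ 2 / 4 * (u : ℂ) ^ 2) * bE ν ((j : ℂ) ^ 2 / 4 * (u : ℂ) ^ 2))) := by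
    apply intervalIntegral.integral_congr_ae
    refine Filter.Eventually.of_forall fun u hu => ?_
    rw [Set.uIoc_of_le zero_le_one] at hu
    have hu := hu.1
    rw [hmul z u hu, hmul j u hu]
    have : u ^ (2 * ν + 1) = u ^ ν * u ^ ν * u := by
      rw [Real.rpow_add_one hu.ne', two_mul, Real.rpow_add hu]
    rw [this]
    push_cast
    ring
  rw [hI, intervalIntegral.integral_const_mul, bessel_eq ν hν, bessel_eq (ν + 1) (by linarith)]
  push_cast
  rw [Complex.cpow_add _ _ hj2, Complex.cpow_one]
  set I := ∫ u in (0 : ℝ)..1, (((u ^ (2 * ν + 1) : ℝ) : ℂ) *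
      (bE ν (z ^ 2 / 4 * (u : ℂ) ^ 2) * bE ν ((j : ℂ) ^ 2 / 4 * (u : ℂ) ^ 2)))
  have hI2 : I = (j : ℂ) ^ 2 / (2 * ((j : ℂ) ^ 2 - z ^ 2)) *
      (bE ν (z ^ 2 / 4) * bE (ν + 1) ((j : ℂ) ^ 2 / 4)) := by
    rw [div_mul_eq_mul_div, eq_div_iff (by simpa using hd)]
    linear_combination 4 * key
  rw [hI2]
  field_simp
end

section
/- Let ν > −1, m ≥ 0, and let a₁, …, a_m be positive reals. For t > 0 and x > 0 define P_t(x) = ∫₀^∞ q^{(ν)}_t(v, x) · ∏_{k=1}^m (−v − a_k) dv. Then for all 0 < s < t and all x > 0: ∫₀^∞ P_t(y) · p^{(ν)}(t−s, y | x) dy = P_s(x). -/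
open MeasureTheory Real

/-- The Bessel function of the first kind `J_ν(z)`. -/
noncomputable def besselJ (ν z : ℝ) : ℝ :=
  ∑' n : ℕ, ((-1 : ℝ) ^ n / (Real.Gamma ((n : ℝ) + 1) * Real.Gamma ((n : ℝ) + 1 + ν))) *
    (z / 2) ^ (2 * (n : ℝ) + ν)

/-- The modified Bessel function of the first kind `I_ν(z)`. -/
noncomputable def besselI (ν z : ℝ) : ℝ :=
  ∑' n : ℕ, ((1 : ℝ) / (Real.Gamma ((n : ℝ) + 1) * Real.Gamma ((n : ℝ) + 1 + ν))) *
    (z / 2) ^ (2 * (n : ℝ) + ν)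

/-- The BESQ^{(ν)} transition probability density `p^{(ν)}(t, y | x)`. -/
noncomputable def besqP (ν t y x : ℝ) : ℝ :=
  (1 / (2 * t)) * (y / x) ^ (ν / 2) * Real.exp (-(x + y) / (2 * t)) *
    besselI ν (Real.sqrt (x * y) / t)

/-- The kernel `q^{(ν)}_t(v, y)`, real form of `p^{(ν)}(−t, −v | y)`. -/
noncomputable def besqQ (ν t v y : ℝ) : ℝ :=
  (1 / (2 * t)) * (v / y) ^ (ν / 2) * Real.exp ((y - v) / (2 * t)) *
    besselJ ν (Real.sqrt (v * y) / t)

/-- Real form of the type-II multiple orthogonal polynomial evaluated along the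
BESQ^{(ν)} backward flow: `P_t(x) = ∫₀^∞ q^{(ν)}_t(v, x) ∏ₖ (−v − aₖ) dv`. -/
noncomputable def typeIIflow (ν : ℝ) {m : ℕ} (a : Fin m → ℝ) (t x : ℝ) : ℝ :=
  ∫ v in Set.Ioi (0 : ℝ), besqQ ν t v x * ∏ k : Fin m, (-v - a k)

open Filter Topology Set

theorem aux_integrable_tsum {μ : Measure ℝ} {F : ℕ → ℝ → ℝ}
    (hF : ∀ i, Integrable (F i) μ) (hS : Summable fun i => ∫ a, ‖F i a‖ ∂μ) :
    Integrable (fun v => ∑' n, F n v) μ := by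
  have hfin : ∑' i, ∫⁻ a, ‖F i a‖ₑ ∂μ ≠ ⊤ := by
    rw [tsum_congr fun i => (ofReal_integral_norm_eq_lintegral_enorm (hF i)).symm]
    exact hS.tsum_ofReal_ne_top
  have hsum : ∀ᵐ a ∂μ, Summable (fun n ↦ ‖F n a‖) := by
    apply summable_norm_of_tsum_eLpNorm_ne_top (p := 1) le_rfl (fun n => (hF n).1)
    simpa only [eLpNorm_one_eq_lintegral_enorm] using hfin
  refine ⟨?_, ?_⟩
  · apply aestronglyMeasurable_of_tendsto_ae atTop
      (f := fun N v => ∑ n ∈ Finset.range N, F n v)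
    · intro N
      exact (integrable_finsetSum _ (fun i _ => hF i)).1
    · filter_upwards [hsum] with a ha
      exact ha.of_norm.hasSum.tendsto_sum_nat
  · refine lt_of_le_of_lt ?_ hfin.lt_top
    rw [← lintegral_tsum (fun i ↦ (hF i).1.enorm)]
    exact lintegral_mono fun a => enorm_tsum_le_tsum_enorm

/-- Connection coefficients. -/
noncomputable def auxM (ν c : ℝ) (k : ℕ) (z : ℝ) : ℝ :=
  ∑ j ∈ Finset.range (k + 1),
    (k.choose j : ℝ) * (Gamma (ν + 1 + k) / Gamma (ν + 1 + j)) * c ^ (k - j) * z ^ j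

theorem aux_falling (ν : ℝ) (hν : -1 < ν) (n k : ℕ) :
    Gamma ((n : ℝ) + 1 + ν + k) / Gamma ((n : ℝ) + 1 + ν) =
      ∑ j ∈ Finset.range (k + 1),
        (k.choose j : ℝ) * (Gamma (ν + 1 + k) / Gamma (ν + 1 + j)) * (n.descFactorial j : ℝ) := by
  have hb : ∀ j : ℕ, 0 < Gamma (ν + 1 + j) := fun j =>
    Gamma_pos_of_pos (by have : (0:ℝ) ≤ j := j.cast_nonneg; linarith)
  have hrec : ∀ j : ℕ, Gamma (ν + 1 + (j + 1 : ℕ)) = (ν + 1 + j) * Gamma (ν + 1 + j) := by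
    intro j
    have h0 : ν + 1 + (j : ℝ) ≠ 0 := by
      have : (0:ℝ) ≤ j := j.cast_nonneg
      linarith
    rw [← Gamma_add_one h0]; push_cast; ring_nf
  have hn : 0 < Gamma ((n : ℝ) + 1 + ν) :=
    Gamma_pos_of_pos (by have : (0:ℝ) ≤ n := n.cast_nonneg; linarith)
  induction k with
  | zero => simp [hn.ne', (show Gamma (ν + 1) ≠ 0 by simpa using (hb 0).ne')]
  | succ k ih =>
    have h0 : (n : ℝ) + 1 + ν + k ≠ 0 := by
      have : (0:ℝ) ≤ k := k.cast_nonneg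
      have : (0:ℝ) ≤ n := n.cast_nonneg
      linarith
    have e1 : Gamma ((n : ℝ) + 1 + ν + (k + 1 : ℕ)) / Gamma ((n : ℝ) + 1 + ν)
        = ((n : ℝ) + 1 + ν + k) * (Gamma ((n : ℝ) + 1 + ν + k) / Gamma ((n : ℝ) + 1 + ν)) := by
      have := Gamma_add_one h0
      push_cast
      rw [← add_assoc, this]; ring
    rw [e1, ih, Finset.mul_sum]
    have e2 : ∀ j : ℕ, ((n : ℝ) + 1 + ν + k) * ((k.choose j : ℝ) *
        (Gamma (ν + 1 + k) / Gamma (ν + 1 + j)) * (n.descFactorial j : ℝ))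
        = (k.choose j : ℝ) * (Gamma (ν + 1 + k) / Gamma (ν + 1 + j)) *
            (n.descFactorial (j + 1) : ℝ)
          + (j + 1 + ν + k) * ((k.choose j : ℝ) *
        (Gamma (ν + 1 + k) / Gamma (ν + 1 + j)) * (n.descFactorial j : ℝ)) := by
      intro j
      have : (n.descFactorial (j + 1) : ℝ) = ((n : ℝ) - j) * n.descFactorial j := by
        rw [Nat.descFactorial_succ]
        push_cast
        rcases le_or_gt j n with h | h
        · rw [Nat.cast_sub h]
        · rw [Nat.descFactorial_eq_zero_iff_lt.2 h]; simp
      rw [this]; ring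
    rw [Finset.sum_congr rfl (fun j _ => e2 j), Finset.sum_add_distrib]
    have e3 : ∑ j ∈ Finset.range (k + 1), ((j : ℝ) + 1 + ν + k) * ((k.choose j : ℝ) *
        (Gamma (ν + 1 + k) / Gamma (ν + 1 + j)) * (n.descFactorial j : ℝ))
        = ∑ j ∈ Finset.range (k + 2), ((j : ℝ) + 1 + ν + k) * ((k.choose j : ℝ) *
        (Gamma (ν + 1 + k) / Gamma (ν + 1 + j)) * (n.descFactorial j : ℝ)) := by
      rw [Finset.sum_range_succ _ (k + 1)]; simp
    rw [e3, Finset.sum_range_succ' _ (k + 1), Finset.sum_range_succ' _ (k + 1), ← add_assoc,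
      ← Finset.sum_add_distrib]
    congr 1
    · apply Finset.sum_congr rfl
      intro j _
      rw [hrec k, hrec j]
      have hj := (hb j).ne'
      have hj0 : ν + 1 + (j : ℝ) ≠ 0 := by
        have : (0:ℝ) ≤ j := j.cast_nonneg
        linarith
      have hc : ((k + 1).choose (j + 1) : ℝ) = k.choose j + k.choose (j + 1) := by
        rw [Nat.choose_succ_succ]; push_cast; rfl
      have hc2 : (k.choose (j + 1) : ℝ) * (j + 1) = k.choose j * ((k : ℝ) - j) := by
        rcases le_or_gt j k with h | h
        · rw [← Nat.cast_sub h]; exact_mod_cast Nat.choose_succ_right_eq k j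
        · rw [Nat.choose_eq_zero_of_lt h, Nat.choose_eq_zero_of_lt (by omega)]; simp
      rw [hc]
      field_simp
      push_cast
      linear_combination Gamma (ν + 1 + k) * (n.descFactorial (j + 1) : ℝ) * hc2
    · rw [hrec k]; simp; ring

theorem aux_exp_falling (w : ℝ) (j : ℕ) :
    HasSum (fun n : ℕ => w ^ n / (n.factorial : ℝ) * (n.descFactorial j : ℝ)) (w ^ j * exp w) := by
  have h := (NormedSpace.expSeries_div_hasSum_exp w).mul_left (w ^ j)
  rw [← Real.exp_eq_exp_ℝ] at h
  have h2 := (hasSum_nat_add_iff (f := fun n : ℕ => w ^ n / (n.factorial : ℝ) *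
    (n.descFactorial j : ℝ)) (g := w ^ j * exp w) j).1 (by
      convert! h using 2
      rename_i n
      have hf := Nat.factorial_mul_descFactorial (Nat.le_add_left j n)
      rw [Nat.add_sub_cancel] at hf
      rw [← hf]
      have h1 : ((n.factorial : ℕ) : ℝ) ≠ 0 := by positivity
      have h2 : (((n + j).descFactorial j : ℕ) : ℝ) ≠ 0 := by
        have := Nat.descFactorial_pos.2 (Nat.le_add_left j n)
        positivity
      push_cast
      field_simp
      ring)
  rw [Finset.sum_eq_zero (fun i hi => by
    rw [Nat.descFactorial_eq_zero_iff_lt.2 (Finset.mem_range.1 hi)]; simp), add_zero] at h2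
  exact h2

theorem aux_series (ν : ℝ) (hν : -1 < ν) (k : ℕ) (w : ℝ) :
    HasSum (fun n : ℕ => w ^ n / (n.factorial : ℝ) *
        (Gamma ((n : ℝ) + 1 + ν + k) / Gamma ((n : ℝ) + 1 + ν))) (exp w * auxM ν 1 k w) := by
  have h := hasSum_sum (s := Finset.range (k + 1)) (fun j _ => (aux_exp_falling w j).mul_left
    ((k.choose j : ℝ) * (Gamma (ν + 1 + k) / Gamma (ν + 1 + j))))
  convert! h using 1
  · funext n
    rw [aux_falling ν hν, Finset.mul_sum]
    exact Finset.sum_congr rfl fun j _ => by ring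
  · rw [auxM, Finset.mul_sum]
    exact Finset.sum_congr rfl fun j _ => by simp; ring

theorem auxM_scale (ν c : ℝ) (hc : 0 < c) (k : ℕ) (z : ℝ) :
    c ^ k * auxM ν 1 k (z / c) = auxM ν c k z := by
  rw [auxM, auxM, Finset.mul_sum]
  apply Finset.sum_congr rfl
  intro j hj
  have : c ^ k = c ^ (k - j) * c ^ j := by
    rw [← pow_add, Nat.sub_add_cancel (by simpa [Nat.lt_succ_iff] using hj)]
  rw [this, div_pow]
  field_simp
  simp

/-- Unified kernel. -/
noncomputable def auxK (ν c z v : ℝ) : ℝ :=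
  c⁻¹ * exp (-(z + v) / c) * ∑' n : ℕ, z ^ n * v ^ ((n : ℝ) + ν) /
    (Gamma ((n : ℝ) + 1) * Gamma ((n : ℝ) + 1 + ν) * c ^ (2 * (n : ℝ) + ν))

theorem auxK_moment (ν : ℝ) (hν : -1 < ν) (c : ℝ) (hc : 0 < c) (z : ℝ) (k : ℕ) :
    IntegrableOn (fun v => v ^ k * auxK ν c z v) (Ioi 0) ∧
      ∫ v in Ioi (0:ℝ), v ^ k * auxK ν c z v = auxM ν c k z := by
  set A : ℕ → ℝ := fun n => c⁻¹ * exp (-z / c) * z ^ n /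
    (Gamma ((n : ℝ) + 1) * Gamma ((n : ℝ) + 1 + ν) * c ^ (2 * (n : ℝ) + ν)) with hA
  set g : ℕ → ℝ → ℝ := fun n v => v ^ (((n : ℝ) + 1 + ν + k) - 1) * exp (-(c⁻¹ * v)) with hg
  have hpos : ∀ n : ℕ, 0 < (n : ℝ) + 1 + ν := fun n => by
    have : (0:ℝ) ≤ n := n.cast_nonneg
    linarith
  have hpos' : ∀ n : ℕ, 0 < (n : ℝ) + 1 + ν + k := fun n => by
    have : (0:ℝ) ≤ k := k.cast_nonneg
    linarith [hpos n]
  have hG : ∀ n : ℕ, 0 < Gamma ((n : ℝ) + 1 + ν) := fun n => Gamma_pos_of_pos (hpos n)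
  have hgi : ∀ n, ∫ v in Ioi (0:ℝ), g n v
      = c ^ ((n : ℝ) + 1 + ν + k) * Gamma ((n : ℝ) + 1 + ν + k) := by
    intro n
    rw [hg, integral_rpow_mul_exp_neg_mul_Ioi (hpos' n) (inv_pos.2 hc)]
    simp
  have hgint : ∀ n, IntegrableOn (g n) (Ioi 0) := by
    intro n
    apply Integrable.of_integral_ne_zero
    rw [hgi]
    have := Gamma_pos_of_pos (hpos' n)
    positivity
  have hterm : ∀ n : ℕ, ∀ z' : ℝ, c⁻¹ * exp (-z / c) * z' ^ n /
      (Gamma ((n : ℝ) + 1) * Gamma ((n : ℝ) + 1 + ν) * c ^ (2 * (n : ℝ) + ν)) *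
      (c ^ ((n : ℝ) + 1 + ν + k) * Gamma ((n : ℝ) + 1 + ν + k))
      = exp (-z / c) * c ^ k * ((z' / c) ^ n / (n.factorial : ℝ) *
        (Gamma ((n : ℝ) + 1 + ν + k) / Gamma ((n : ℝ) + 1 + ν))) := by
    intro n z'
    rw [Gamma_nat_eq_factorial]
    have e1 : c ^ ((n : ℝ) + 1 + ν + k) = c ^ n * c * c ^ ν * c ^ k := by
      rw [rpow_add hc, rpow_add hc, rpow_add hc, rpow_one, rpow_natCast, rpow_natCast]
    have e2 : c ^ (2 * (n : ℝ) + ν) = c ^ n * c ^ n * c ^ ν := by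
      rw [rpow_add hc, two_mul, rpow_add hc, rpow_natCast]
    rw [e1, e2, div_pow]
    have := (hG n).ne'
    have h3 : c ^ ν ≠ 0 := (rpow_pos_of_pos hc ν).ne'
    have h4 : (n.factorial : ℝ) ≠ 0 := by positivity
    field_simp
  have hFint : ∀ n, Integrable (fun v => A n * g n v) (volume.restrict (Ioi 0)) :=
    fun n => (hgint n).const_mul _
  have hnorm : ∀ n, ∫ v in Ioi (0:ℝ), ‖A n * g n v‖ =
      exp (-z / c) * c ^ k * ((|z| / c) ^ n / (n.factorial : ℝ) *
        (Gamma ((n : ℝ) + 1 + ν + k) / Gamma ((n : ℝ) + 1 + ν))) := by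
    intro n
    rw [← hterm, ← hgi n, ← integral_const_mul]
    apply setIntegral_congr_fun measurableSet_Ioi
    intro v hv
    have hv : 0 < v := hv
    have hgn : 0 ≤ g n v := by simp only [hg]; positivity
    have hG1 : 0 < Gamma ((n : ℝ) + 1) := Gamma_pos_of_pos (by positivity)
    simp only [norm_mul, Real.norm_eq_abs]
    rw [abs_of_nonneg hgn, hA]
    simp only [abs_mul, abs_div, abs_pow, abs_of_pos hG1, abs_of_pos (hG n), abs_of_pos (exp_pos _),
      abs_of_pos (inv_pos.2 hc), abs_of_pos (rpow_pos_of_pos hc _)]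
  have hS : Summable fun n => ∫ v in Ioi (0:ℝ), ‖A n * g n v‖ := by
    rw [funext hnorm]
    exact (aux_series ν hν k _).summable.mul_left _
  have hI := aux_integrable_tsum hFint hS
  have hE := hasSum_integral_of_summable_integral_norm hFint hS
  have heq : ∀ v ∈ Ioi (0:ℝ), ∑' n, A n * g n v = v ^ k * auxK ν c z v := by
    intro v hv
    have hv : 0 < v := hv
    rw [auxK, ← tsum_mul_left, ← tsum_mul_left]
    apply tsum_congr
    intro n
    simp only [hA, hg]
    have e1 : v ^ ((n : ℝ) + 1 + ν + k - 1) = v ^ k * v ^ ((n : ℝ) + ν) := by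
      rw [← rpow_natCast v k, ← rpow_add hv]; ring_nf
    have e2 : exp (-(z + v) / c) = exp (-z / c) * exp (-(c⁻¹ * v)) := by
      rw [← exp_add]; congr 1; field_simp; ring
    rw [e1, e2]; ring
  refine ⟨IntegrableOn.congr_fun hI heq measurableSet_Ioi, ?_⟩
  rw [← setIntegral_congr_fun measurableSet_Ioi heq]
  refine hE.unique ?_
  have := (aux_series ν hν k (z / c)).mul_left (exp (-z / c) * c ^ k)
  convert! this using 1
  · funext n
    rw [integral_const_mul, hgi, hA, hterm]
  · rw [← auxM_scale ν c hc, neg_div, exp_neg]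
    have := (exp_pos (z / c)).ne'
    field_simp

theorem aux_pow (ν c z v : ℝ) (hc : 0 < c) (hz : 0 < z) (hv : 0 < v) (n : ℕ) :
    (v / z) ^ (ν / 2) * (√(z * v) / c) ^ (2 * (n : ℝ) + ν)
      = z ^ n * v ^ ((n : ℝ) + ν) / c ^ (2 * (n : ℝ) + ν) := by
  rw [div_rpow (sqrt_nonneg _) hc.le, div_rpow hv.le hz.le, sqrt_eq_rpow,
    ← rpow_mul (by positivity), mul_rpow hz.le hv.le,
    show 1 / 2 * (2 * (n : ℝ) + ν) = n + ν / 2 by ring,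
    rpow_add hz, rpow_add hv, rpow_natCast, rpow_natCast, rpow_add hv, rpow_natCast]
  have : v ^ ν = v ^ (ν / 2) * v ^ (ν / 2) := by rw [← rpow_add hv]; ring_nf
  rw [this]
  have := (rpow_pos_of_pos hz (ν / 2)).ne'
  field_simp

theorem besqP_eq (ν t y x : ℝ) (ht : 0 < t) (hx : 0 < x) (hy : 0 < y) :
    besqP ν t y x = auxK ν (2 * t) x y := by
  rw [besqP, auxK, besselI, ← tsum_mul_left, ← tsum_mul_left]
  apply tsum_congr
  intro n
  have h := aux_pow ν (2 * t) x y (by positivity) hx hy n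
  rw [show √(x * y) / t / 2 = √(x * y) / (2 * t) by rw [div_div, mul_comm t 2]]
  calc _ = (2 * t)⁻¹ * exp (-(x + y) / (2 * t)) *
      (1 / (Gamma ((n : ℝ) + 1) * Gamma ((n : ℝ) + 1 + ν))) * ((y / x) ^ (ν / 2) *
        (√(x * y) / (2 * t)) ^ (2 * (n : ℝ) + ν)) := by ring
    _ = _ := by rw [h]; ring

theorem besqQ_eq (ν t v y : ℝ) (ht : 0 < t) (hv : 0 < v) (hy : 0 < y) :
    besqQ ν t v y = auxK ν (2 * t) (-y) v := by
  rw [besqQ, auxK, besselJ, ← tsum_mul_left, ← tsum_mul_left]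
  apply tsum_congr
  intro n
  have h := aux_pow ν (2 * t) y v (by positivity) hy hv n
  rw [show √(v * y) / t / 2 = √(y * v) / (2 * t) by rw [div_div, mul_comm t 2, mul_comm y v],
    show -(-y + v) / (2 * t) = (y - v) / (2 * t) by ring, neg_pow y n]
  calc _ = (2 * t)⁻¹ * exp ((y - v) / (2 * t)) *
      ((-1) ^ n / (Gamma ((n : ℝ) + 1) * Gamma ((n : ℝ) + 1 + ν))) * ((v / y) ^ (ν / 2) *
        (√(y * v) / (2 * t)) ^ (2 * (n : ℝ) + ν)) := by ring
    _ = _ := by rw [h]; ring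

theorem aux_flow (ν : ℝ) (hν : -1 < ν) {m : ℕ} (a : Fin m → ℝ) (Q : Polynomial ℝ)
    (hQ : ∀ v, ∏ k : Fin m, (-v - a k) = Q.eval v) (t y : ℝ) (ht : 0 < t) (hy : 0 < y) :
    typeIIflow ν a t y =
      ∑ k ∈ Finset.range (Q.natDegree + 1), Q.coeff k * auxM ν (2 * t) k (-y) := by
  have hc : 0 < 2 * t := by positivity
  have h1 : ∀ v ∈ Ioi (0:ℝ), besqQ ν t v y * ∏ k : Fin m, (-v - a k) =
      ∑ k ∈ Finset.range (Q.natDegree + 1), Q.coeff k * (v ^ k * auxK ν (2 * t) (-y) v) := by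
    intro v hv
    rw [besqQ_eq ν t v y ht hv hy, hQ, Polynomial.eval_eq_sum_range, Finset.mul_sum]
    exact Finset.sum_congr rfl fun k _ => by ring
  rw [typeIIflow, setIntegral_congr_fun measurableSet_Ioi h1, integral_finsetSum]
  · refine Finset.sum_congr rfl fun k _ => ?_
    rw [integral_const_mul, (auxK_moment ν hν _ hc _ k).2]
  · intro k _
    exact (auxK_moment ν hν _ hc _ k).1.const_mul _

theorem auxM_comp (ν : ℝ) (hν : -1 < ν) (c d x : ℝ) (k : ℕ) :
    ∑ j ∈ Finset.range (k + 1), (k.choose j : ℝ) * (Gamma (ν + 1 + k) / Gamma (ν + 1 + j)) *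
      c ^ (k - j) * ((-1) ^ j * auxM ν d j x) = auxM ν (c - d) k (-x) := by
  have hb : ∀ j : ℕ, Gamma (ν + 1 + j) ≠ 0 := fun j =>
    (Gamma_pos_of_pos (by have : (0:ℝ) ≤ j := j.cast_nonneg; linarith)).ne'
  have e : ∀ j ∈ Finset.range (k + 1), auxM ν d j x = ∑ i ∈ Finset.range (k + 1),
      (j.choose i : ℝ) * (Gamma (ν + 1 + j) / Gamma (ν + 1 + i)) * d ^ (j - i) * x ^ i := by
    intro j hj
    rw [auxM]
    apply Finset.sum_subset
    · intro i hi; simp at *; omega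
    · intro i _ hi
      rw [Nat.choose_eq_zero_of_lt (by simp at hi; omega)]; simp
  rw [Finset.sum_congr rfl fun j hj => by rw [e j hj, Finset.mul_sum, Finset.mul_sum],
    Finset.sum_comm, auxM]
  apply Finset.sum_congr rfl
  intro i hi
  have hik : i ≤ k := by simp at hi; omega
  obtain ⟨l, rfl⟩ := Nat.exists_eq_add_of_le hik
  rw [show i + l + 1 = i + (l + 1) by ring, Finset.sum_range_add, Finset.sum_eq_zero, zero_add]
  · rw [Nat.add_sub_cancel_left, sub_eq_add_neg, add_comm c (-d), add_pow, Finset.mul_sum,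
      Finset.sum_mul]
    apply Finset.sum_congr rfl
    intro r hr
    have hrl : r ≤ l := by simp at hr; omega
    have hch : ((i + l).choose (i + r) : ℝ) * ((i + r).choose i : ℝ)
        = (i + l).choose i * (l.choose r : ℝ) := by
      have := Nat.choose_mul (n := i + l) (k := i + r) (s := i) (by omega)
      simp only [Nat.add_sub_cancel_left] at this
      exact_mod_cast this
    rw [show i + l - (i + r) = l - r by omega, show i + r - i = r by omega, pow_add,
      neg_pow d r, neg_pow x i]
    have h1 := hb (i + r)
    have h2 := hb i
    field_simp
    linear_combination Gamma (ν + 1 + (i + l : ℕ)) * c ^ (l - r) * d ^ r * x ^ i * hch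
  · intro j hj
    rw [Nat.choose_eq_zero_of_lt (n := j) (k := i) (by simpa using hj)]; simp

/-- `∫₀^∞ P_t(y) p^{(ν)}(t−s, y | x) dy = P_s(x)` for `0 < s < t`. -/
theorem typeIIflow_backward
    (ν : ℝ) (hν : -1 < ν) (m : ℕ) (a : Fin m → ℝ) (hapos : ∀ k, 0 < a k)
    (s t : ℝ) (hs : 0 < s) (hst : s < t) (x : ℝ) (hx : 0 < x) :
    ∫ y in Set.Ioi (0 : ℝ), typeIIflow ν a t y * besqP ν (t - s) y x
      = typeIIflow ν a s x := by
  have ht : 0 < t := hs.trans hst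
  have hd : 0 < t - s := sub_pos.2 hst
  have hd2 : 0 < 2 * (t - s) := by positivity
  obtain ⟨Q, hQ⟩ : ∃ Q : Polynomial ℝ, ∀ v, ∏ k : Fin m, (-v - a k) = Q.eval v :=
    ⟨∏ k : Fin m, (-Polynomial.X - Polynomial.C (a k)), fun v => by
      simp [Polynomial.eval_prod]⟩
  have h1 : ∀ y ∈ Ioi (0:ℝ), typeIIflow ν a t y * besqP ν (t - s) y x =
      ∑ k ∈ Finset.range (Q.natDegree + 1), ∑ j ∈ Finset.range (k + 1),
        (Q.coeff k * ((k.choose j : ℝ) * (Gamma (ν + 1 + k) / Gamma (ν + 1 + j)) *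
          (2 * t) ^ (k - j) * (-1) ^ j)) * (y ^ j * auxK ν (2 * (t - s)) x y) := by
    intro y hy
    have hy : 0 < y := hy
    rw [aux_flow ν hν a Q hQ t y ht hy, besqP_eq ν _ y x hd hx hy, Finset.sum_mul]
    apply Finset.sum_congr rfl
    intro k _
    rw [auxM, Finset.mul_sum, Finset.sum_mul]
    apply Finset.sum_congr rfl
    intro j _
    rw [neg_pow y j]; ring
  have hint : ∀ (k j : ℕ), Integrable (fun y =>
      (Q.coeff k * ((k.choose j : ℝ) * (Gamma (ν + 1 + k) / Gamma (ν + 1 + j)) *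
          (2 * t) ^ (k - j) * (-1) ^ j)) * (y ^ j * auxK ν (2 * (t - s)) x y))
      (volume.restrict (Ioi 0)) := fun k j => (auxK_moment ν hν _ hd2 x j).1.const_mul _
  rw [setIntegral_congr_fun measurableSet_Ioi h1, aux_flow ν hν a Q hQ s x hs hx,
    integral_finsetSum _ (fun k _ => integrable_finsetSum _ fun j _ => hint k j)]
  apply Finset.sum_congr rfl
  intro k _
  rw [integral_finsetSum _ (fun j _ => hint k j),
    show 2 * s = 2 * t - 2 * (t - s) by ring, ← auxM_comp ν hν, Finset.mul_sum]
  apply Finset.sum_congr rfl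
  intro j _
  rw [integral_const_mul, (auxK_moment ν hν _ hd2 x j).2]
  ring
end

section
/- Let ν > −1 and let (j_{ν,k})_{k≥1} be the strictly increasing enumeration of the positive zeros of the Bessel function J_ν. Then for every i ≥ 1 and every real z > 0 with z ≠ j_{ν,i}, the infinite product ∏_{k ≠ i} (j_{ν,k}² − z²)/(j_{ν,k}² − j_{ν,i}²) converges and J_{ν+1}(j_{ν,i}) · (z/j_{ν,i})^{ν} · ∏_{k ≠ i} (j_{ν,k}² − z²)/(j_{ν,k}² − j_{ν,i}²) = 2 j_{ν,i} · J_ν(z) / (j_{ν,i}² − z²). -/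
open Real

open Filter Topology

/-- coefficients -/
noncomputable def bc (ν : ℝ) (n : ℕ) : ℝ :=
  (-1 : ℝ) ^ n / (Real.Gamma ((n : ℝ) + 1) * Real.Gamma ((n : ℝ) + 1 + ν))

/-- the entire function -/
noncomputable def bF (ν : ℝ) (w : ℂ) : ℂ := ∑' n : ℕ, (bc ν n : ℂ) * w ^ n

lemma gpos {ν : ℝ} (hν : -1 < ν) (n : ℕ) : 0 < Real.Gamma ((n : ℝ) + 1 + ν) :=
  Real.Gamma_pos_of_pos (by have : (0:ℝ) ≤ n := n.cast_nonneg
                            linarith)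

lemma bc_abs {ν : ℝ} (hν : -1 < ν) (n : ℕ) :
    |bc ν n| = (Real.Gamma ((n : ℝ) + 1 + ν))⁻¹ / (n.factorial : ℝ) := by
  have := gpos hν n
  rw [bc, Real.Gamma_nat_eq_factorial, abs_div, abs_pow, abs_neg, abs_one, one_pow,
    abs_of_pos (by positivity)]
  field_simp

lemma gbound {ν : ℝ} (hν : -1 < ν) {ε : ℝ} (hε : 0 < ε) :
    ∃ C : ℝ, 0 < C ∧ ∀ n : ℕ, (Real.Gamma ((n : ℝ) + 1 + ν))⁻¹ ≤ C * ε ^ n := by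
  have hs : Summable (fun n : ℕ => (ε⁻¹) ^ n * (Real.Gamma ((n : ℝ) + 1 + ν))⁻¹) := by
    refine summable_of_ratio_test_tendsto_lt_one (l := 0) (by norm_num) ?_ ?_
    · refine Eventually.of_forall fun n => ?_
      have := gpos hν n
      positivity
    · have h1 : ∀ n : ℕ, ‖(ε⁻¹) ^ (n+1) * (Real.Gamma (((n+1 : ℕ) : ℝ) + 1 + ν))⁻¹‖ /
          ‖(ε⁻¹) ^ n * (Real.Gamma ((n : ℝ) + 1 + ν))⁻¹‖ = ε⁻¹ / ((n : ℝ) + (1 + ν)) := by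
        intro n
        have h := gpos hν n
        have h2 := gpos hν (n+1)
        have h0 : (0:ℝ) < (n : ℝ) + 1 + ν := by
          have : (0:ℝ) ≤ n := n.cast_nonneg
          linarith
        rw [Real.norm_of_nonneg (by positivity), Real.norm_of_nonneg (by positivity)]
        have : ((n+1 : ℕ) : ℝ) + 1 + ν = ((n : ℝ) + 1 + ν) + 1 := by push_cast; ring
        rw [this, Real.Gamma_add_one h0.ne', pow_succ, ← add_assoc]
        field_simp
      simp_rw [h1]
      exact Tendsto.const_div_atTop (tendsto_atTop_add_const_right _ _ tendsto_natCast_atTop_atTop) _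
  refine ⟨∑' n : ℕ, (ε⁻¹) ^ n * (Real.Gamma ((n : ℝ) + 1 + ν))⁻¹, ?_, ?_⟩
  · refine hs.tsum_pos (fun n => ?_) 0 ?_
    · have := gpos hν n
      positivity
    · have := gpos hν 0
      positivity
  · intro n
    have := hs.le_tsum n (fun m _ => by
      have := gpos hν m
      positivity)
    calc _ = ((ε⁻¹) ^ n * (Real.Gamma ((n : ℝ) + 1 + ν))⁻¹) * ε ^ n := by
          rw [inv_pow]; field_simp
      _ ≤ _ := by gcongr

lemma bc_bound {ν : ℝ} (hν : -1 < ν) {ε : ℝ} (hε : 0 < ε) :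
    ∃ C : ℝ, 0 < C ∧ ∀ n : ℕ, |bc ν n| ≤ C * (ε ^ n / n.factorial) := by
  obtain ⟨C, hC, h⟩ := gbound hν hε
  refine ⟨C, hC, fun n => ?_⟩
  rw [bc_abs hν, ← mul_div_assoc]
  gcongr
  exact h n

lemma bF_term {ν : ℝ} (n : ℕ) (w : ℂ) : ‖(bc ν n : ℂ) * w ^ n‖ = |bc ν n| * ‖w‖ ^ n := by
  rw [norm_mul, norm_pow, Complex.norm_real, Real.norm_eq_abs]

lemma bF_summable_norm {ν : ℝ} (hν : -1 < ν) (w : ℂ) :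
    Summable (fun n : ℕ => ‖(bc ν n : ℂ) * w ^ n‖) := by
  obtain ⟨C, hC, h⟩ := bc_bound hν one_pos
  refine Summable.of_nonneg_of_le (fun n => norm_nonneg _) (fun n => ?_)
    ((Real.summable_pow_div_factorial ‖w‖).mul_left C)
  rw [bF_term]
  calc _ ≤ C * (1 ^ n / n.factorial) * ‖w‖ ^ n := by gcongr; exact h n
    _ = _ := by rw [one_pow]; ring

lemma bF_summable {ν : ℝ} (hν : -1 < ν) (w : ℂ) :
    Summable (fun n : ℕ => (bc ν n : ℂ) * w ^ n) := (bF_summable_norm hν w).of_norm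

lemma bF_growth {ν : ℝ} (hν : -1 < ν) {ε : ℝ} (hε : 0 < ε) :
    ∃ C : ℝ, 0 < C ∧ ∀ w : ℂ, ‖bF ν w‖ ≤ C * Real.exp (ε * ‖w‖) := by
  obtain ⟨C, hC, h⟩ := bc_bound hν hε
  refine ⟨C, hC, fun w => ?_⟩
  refine (norm_tsum_le_tsum_norm (bF_summable_norm hν w)).trans ?_
  rw [Real.exp_eq_exp_ℝ, NormedSpace.exp_eq_tsum_div, ← tsum_mul_left]
  refine (bF_summable_norm hν w).tsum_le_tsum (fun n => ?_)
    ((Real.summable_pow_div_factorial _).mul_left C)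
  rw [bF_term]
  calc _ ≤ C * (ε ^ n / n.factorial) * ‖w‖ ^ n := by gcongr; exact h n
    _ = _ := by rw [mul_pow]; ring

lemma bc_succ {ν : ℝ} (n : ℕ) : bc ν (n+1) * (n+1) = - bc (ν+1) n := by
  rw [bc, bc, Real.Gamma_nat_eq_factorial, Real.Gamma_nat_eq_factorial, Nat.factorial_succ]
  have : ((n+1 : ℕ) : ℝ) + 1 + ν = (n : ℝ) + 1 + (ν + 1) := by push_cast; ring
  rw [this]
  push_cast
  have : (n.factorial : ℝ) ≠ 0 := by positivity
  have : (n : ℝ) + 1 ≠ 0 := by positivity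
  rw [pow_succ]
  field_simp

lemma bF_hasDerivAt {ν : ℝ} (hν : -1 < ν) (w : ℂ) : HasDerivAt (bF ν) (- bF (ν+1) w) w := by
  have hν1 : -1 < ν + 1 := by linarith
  obtain ⟨R, hR⟩ : ∃ R : ℝ, ‖w‖ < R := exists_gt _
  have hR0 : 0 < R := (norm_nonneg _).trans_lt hR
  -- shifted
  have key := hasDerivAt_tsum_of_isPreconnected (𝕜 := ℂ) (F := ℂ)
    (g := fun (n : ℕ) (w : ℂ) => (bc ν (n+1) : ℂ) * w ^ (n+1))
    (g' := fun (n : ℕ) (w : ℂ) => -((bc (ν+1) n : ℂ) * w ^ n))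
    (u := fun n : ℕ => ‖(bc (ν+1) n : ℂ) * (R : ℂ) ^ n‖) (t := Metric.ball 0 R) (y₀ := 0) (y := w)
    (bF_summable_norm hν1 _) Metric.isOpen_ball (convex_ball _ _).isPreconnected ?_ ?_ ?_ ?_ ?_
  · have h2 : bF ν = fun w => (bc ν 0 : ℂ) + ∑' n : ℕ, (bc ν (n+1) : ℂ) * w ^ (n+1) := by
      funext w
      rw [bF, (bF_summable hν w).tsum_eq_zero_add]
      simp
    rw [h2]
    have := key.const_add (bc ν 0 : ℂ)
    rwa [tsum_neg] at this
  · intro n y _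
    have := (hasDerivAt_pow (n+1) y).const_mul (bc ν (n+1) : ℂ)
    convert! this using 1
    have h := congrArg (fun x : ℝ => (x : ℂ)) (bc_succ (ν := ν) n)
    push_cast at h
    rw [← neg_mul, ← h]
    push_cast
    ring
  · intro n y hy
    rw [norm_neg, bF_term, bF_term, Complex.norm_real, Real.norm_of_nonneg hR0.le]
    have : ‖y‖ ≤ R := by simpa using (mem_ball_zero_iff.1 hy).le
    gcongr
  · simpa using hR0
  · simp
  · simpa using hR

lemma bF_ode {ν : ℝ} (hν : -1 < ν) (w : ℂ) :
    w * bF (ν+1+1) w - (ν+1) * bF (ν+1) w + bF ν w = 0 := by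
  have hν1 : -1 < ν + 1 := by linarith
  have hν2 : -1 < ν + 1 + 1 := by linarith
  have e : ∀ n : ℕ, (bc (ν+1+1) n) - (ν+1) * bc (ν+1) (n+1) + bc ν (n+1) = 0 := by
    intro n
    have h0 : (0:ℝ) < (n : ℝ) + 1 + (ν + 1) := by
      have : (0:ℝ) ≤ n := n.cast_nonneg
      linarith
    have hg := gpos hν1 n
    rw [bc, bc, bc, Real.Gamma_nat_eq_factorial, Real.Gamma_nat_eq_factorial, Nat.factorial_succ]
    have e1 : ((n+1 : ℕ) : ℝ) + 1 + ν = (n : ℝ) + 1 + (ν + 1) := by push_cast; ring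
    have e2 : ((n+1 : ℕ) : ℝ) + 1 + (ν + 1) = (n : ℝ) + 1 + (ν + 1) + 1 := by push_cast; ring
    have e3 : (n : ℝ) + 1 + (ν + 1 + 1) = (n : ℝ) + 1 + (ν + 1) + 1 := by ring
    rw [e1, e2, e3, Real.Gamma_add_one h0.ne']
    push_cast
    have : (n.factorial : ℝ) ≠ 0 := by positivity
    have : (n : ℝ) + 1 ≠ 0 := by positivity
    rw [pow_succ]
    field_simp
    ring
  have e0 : (ν+1) * bc (ν+1) 0 = bc ν 0 := by
    have h0 : 0 < 1 + ν := by linarith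
    have hg := Real.Gamma_pos_of_pos h0
    simp only [bc, pow_zero, Nat.cast_zero, zero_add, Real.Gamma_one, one_mul]
    rw [show 1 + (ν + 1) = (1 + ν) + 1 by ring, Real.Gamma_add_one h0.ne']
    field_simp
    ring
  have s1 := (bF_summable hν1 w)
  have s0 := (bF_summable hν w)
  have s2 := (bF_summable hν2 w)
  have s1' := (summable_nat_add_iff 1).2 s1
  have s0' := (summable_nat_add_iff 1).2 s0
  rw [bF, bF, bF, s1.tsum_eq_zero_add, s0.tsum_eq_zero_add]
  have e0' : ((ν:ℂ)+1) * bc (ν+1) 0 = bc ν 0 := by exact_mod_cast e0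
  have : w * ∑' n, (bc (ν+1+1) n : ℂ) * w ^ n - ((ν:ℂ)+1) * ∑' n, (bc (ν+1) (n+1) : ℂ) * w ^ (n+1)
      + ∑' n, (bc ν (n+1) : ℂ) * w ^ (n+1) = 0 := by
    rw [← tsum_mul_left, ← tsum_mul_left, ← (s2.mul_left _).tsum_sub (s1'.mul_left _),
      ← ((s2.mul_left _).sub (s1'.mul_left _)).tsum_add s0', ← tsum_zero (α := ℂ) (β := ℕ)]
    congr 1
    funext n
    have h := congrArg (fun x : ℝ => (x : ℂ)) (e n)
    push_cast at h
    linear_combination w ^ (n+1) * h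
  linear_combination this - e0'

lemma bF_real {ν : ℝ} (x : ℝ) : bF ν x = ((∑' n : ℕ, bc ν n * x ^ n : ℝ) : ℂ) := by
  rw [bF, Complex.ofReal_tsum]
  push_cast
  rfl

lemma bF_zero_pos {ν : ℝ} : bF ν 0 = ((Real.Gamma (1 + ν))⁻¹ : ℝ) := by
  rw [bF, tsum_eq_single 0]
  · simp [bc]
  · intro n hn
    simp [hn]

lemma besselJ_eq {ν : ℝ} {z : ℝ} (hz : 0 < z) :
    ((besselJ ν z : ℝ) : ℂ) = ((z / 2) ^ ν : ℝ) * bF ν ((z ^ 2 / 4 : ℝ) : ℂ) := by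
  rw [bF_real, ← Complex.ofReal_mul, ← tsum_mul_left, besselJ]
  congr 2
  funext n
  rw [Real.rpow_add (by positivity), ← bc]
  have : (z / 2) ^ (2 * (n:ℝ)) = (z ^ 2 / 4) ^ n := by
    rw [Real.rpow_mul (by positivity), Real.rpow_natCast]
    congr 1
    norm_num
    ring
  rw [this]
  ring

lemma bF_nonpos {ν : ℝ} (hν : -1 < ν) {x : ℝ} (hx : x ≤ 0) : bF ν x ≠ 0 := by
  have hs := bF_summable_norm hν x
  simp_rw [bF_term, Complex.norm_real, Real.norm_eq_abs] at hs
  rw [bF_real]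
  have e : ∀ n, bc ν n * x ^ n = |bc ν n| * |x| ^ n := by
    intro n
    have := gpos hν n
    rw [bc_abs hν, bc, abs_of_nonpos hx, Real.Gamma_nat_eq_factorial, neg_pow x]
    field_simp
  simp_rw [e]
  refine Complex.ofReal_ne_zero.2 (hs.tsum_pos (fun n => by positivity) 0 ?_).ne'
  have := gpos hν 0
  rw [bc_abs hν]
  positivity

lemma log_bound {h : ℂ → ℂ} {R M : ℝ} (hR : 0 < R) (hM : 0 < M)
    (hd : DifferentiableOn ℂ h (Metric.ball 0 R)) (hne : ∀ w ∈ Metric.ball (0:ℂ) R, h w ≠ 0)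
    (hb : ∀ w ∈ Metric.ball (0:ℂ) R, ‖h w‖ ≤ ‖h 0‖ * Real.exp M) {w : ℂ}
    (hw : w ∈ Metric.ball (0:ℂ) R) :
    ∃ L : ℂ, h w = h 0 * Complex.exp L ∧ ‖L‖ ≤ 2 * M * ‖w‖ / (R - ‖w‖) := by
  have h0m : (0:ℂ) ∈ Metric.ball (0:ℂ) R := by simpa using hR
  have hopen : IsOpen (Metric.ball (0:ℂ) R) := Metric.isOpen_ball
  have hdd : DifferentiableOn ℂ (fun w => deriv h w / h w) (Metric.ball 0 R) :=
    (hd.deriv hopen).div hd hne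
  obtain ⟨L, hL0, hL⟩ := hdd.isExactOn_ball.with_val_at 0 0
  have hc : ∀ w ∈ Metric.ball (0:ℂ) R, h w = h 0 * Complex.exp (L w) := by
    intro w hw
    have hder : ∀ w ∈ Metric.ball (0:ℂ) R,
        HasDerivAt (fun w => h w * Complex.exp (- L w)) 0 w := by
      intro w hw
      have h1 := (hd.differentiableAt (hopen.mem_nhds hw)).hasDerivAt
      have h2 := ((hL w hw).neg).cexp
      have h3 := h1.mul h2
      convert! h3 using 1
      have := hne w hw
      field_simp
      ring
    have := hopen.is_const_of_deriv_eq_zero (convex_ball _ _).isPreconnected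
      (f := fun w => h w * Complex.exp (- L w))
      (fun w hw => (hder w hw).differentiableAt.differentiableWithinAt)
      (fun w hw => (hder w hw).deriv) hw h0m
    simp only [hL0, neg_zero, Complex.exp_zero, mul_one] at this
    rw [← this, mul_assoc, ← Complex.exp_add, neg_add_cancel, Complex.exp_zero, mul_one]
  refine ⟨L w, hc w hw, ?_⟩
  refine Complex.borelCaratheodory_zero hM
    (fun w hw => (hL w hw).differentiableAt.differentiableWithinAt) ?_ hR hw hL0
  intro x hx
  have h1 := hb x hx
  rw [hc x hx, norm_mul, Complex.norm_exp] at h1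
  have h2 : 0 < ‖h 0‖ := norm_pos_iff.2 (hne 0 h0m)
  exact Real.exp_le_exp.1 (le_of_mul_le_mul_left h1 h2)

lemma quot_exists {f : ℂ → ℂ} (hf : Differentiable ℂ f) (a : ℕ → ℝ) (apos : ∀ k, 0 < a k)
    (amono : StrictMono a) (hz : ∀ k, f (a k) = 0) (N : ℕ) :
    ∃ g : ℂ → ℂ, Differentiable ℂ g ∧
      ∀ w, f w = (∏ k ∈ Finset.range N, (1 - w / a k)) * g w := by
  induction N with
  | zero => exact ⟨f, hf, by simp⟩
  | succ N ih =>
    obtain ⟨g, hg, h⟩ := ih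
    have hgz : g (a N) = 0 := by
      have h1 := h (a N)
      rw [hz] at h1
      rcases mul_eq_zero.1 h1.symm with h2 | h2
      · obtain ⟨k, hk, h3⟩ := Finset.prod_eq_zero_iff.1 h2
        exfalso
        have hk' : a k < a N := amono (Finset.mem_range.1 hk)
        have : (a k : ℂ) ≠ 0 := Complex.ofReal_ne_zero.2 (apos k).ne'
        rw [sub_eq_zero, eq_div_iff this, one_mul] at h3
        exact hk'.ne (Complex.ofReal_injective h3)
      · exact h2
    have haN : (a N : ℂ) ≠ 0 := Complex.ofReal_ne_zero.2 (apos N).ne'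
    refine ⟨fun w => -(a N : ℂ) * dslope g (a N) w, ?_, ?_⟩
    · refine Differentiable.const_mul ?_ _
      rw [← differentiableOn_univ]
      exact (Complex.differentiableOn_dslope univ_mem).2 hg.differentiableOn
    · intro w
      have := sub_smul_dslope g (a N : ℂ) w
      rw [hgz, sub_zero, smul_eq_mul] at this
      rw [h w, Finset.prod_range_succ, ← this]
      field_simp
      ring

lemma hadamard {f : ℂ → ℂ} (hf : Differentiable ℂ f)
    (hgr : ∀ ε : ℝ, 0 < ε → ∃ C : ℝ, 0 < C ∧ ∀ w : ℂ, ‖f w‖ ≤ C * Real.exp (ε * ‖w‖))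
    (a : ℕ → ℝ) (apos : ∀ k, 0 < a k)
    (amono : StrictMono a) (atop : Tendsto a atTop atTop) (hz : ∀ k, f (a k) = 0)
    (hs : ∀ k, deriv f (a k) ≠ 0) (hall : ∀ w, f w = 0 → ∃ k, w = a k) :
    ∃ g : ℕ → ℂ → ℂ, (∀ N, Differentiable ℂ (g N)) ∧
      (∀ N w, f w = (∏ k ∈ Finset.range N, (1 - w / a k)) * g N w) ∧
      ∀ w, Tendsto (fun N => g N w) atTop (𝓝 (f 0)) := by
  choose g hg hfg using quot_exists hf a apos amono hz
  refine ⟨g, hg, hfg, fun w => ?_⟩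
  have hane : ∀ k, (a k : ℂ) ≠ 0 := fun k => Complex.ofReal_ne_zero.2 (apos k).ne'
  have hf0 : f 0 ≠ 0 := by
    intro h
    obtain ⟨k, hk⟩ := hall 0 h
    exact hane k hk.symm
  have hg0 : ∀ N, g N 0 = f 0 := by
    intro N
    rw [hfg N 0]
    simp
  -- nonvanishing
  have hne : ∀ N, ∀ w ∈ Metric.ball (0:ℂ) (a N), g N w ≠ 0 := by
    intro N w hw h
    have h1 : f w = 0 := by rw [hfg N w, h, mul_zero]
    obtain ⟨k, rfl⟩ := hall w h1
    have hk : k < N := by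
      rw [mem_ball_zero_iff, Complex.norm_real, Real.norm_of_nonneg (apos k).le] at hw
      exact amono.lt_iff_lt.1 hw
    apply hs k
    have e : f = fun w : ℂ => ((1 - w / a k) * (∏ l ∈ (Finset.range N).erase k, (1 - w / a l))) * g N w := by
      funext w
      rw [hfg N w, Finset.mul_prod_erase _ (fun l => 1 - w / (a l : ℂ)) (Finset.mem_range.2 hk)]
    rw [e]
    have d1 : DifferentiableAt ℂ
        (fun w => (1 - w / a k) * (∏ l ∈ (Finset.range N).erase k, (1 - w / (a l : ℂ)))) (a k) := by
      fun_prop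
    have d2 := d1.hasDerivAt.mul (hg N (a k)).hasDerivAt
    have d3 := d2.deriv
    refine Eq.trans d3 ?_
    rw [h, div_self (hane k)]
    simp
  -- bound
  have hbd : ∀ (ε C : ℝ), 0 < ε → (∀ w : ℂ, ‖f w‖ ≤ C * Real.exp (ε * ‖w‖)) → ∀ N,
      ∀ w ∈ Metric.ball (0:ℂ) (a N), ‖g N w‖ ≤ C * Real.exp (ε * (2 * a N)) := by
    intro ε C hε hC N w hw
    have h2 : (2 * a N) ≠ 0 := by have := apos N; positivity
    refine Complex.norm_le_of_forall_mem_frontier_norm_le (U := Metric.ball (0:ℂ) (2 * a N))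
      Metric.isBounded_ball (hg N).diffContOnCl ?_ (subset_closure ?_)
    · intro z hz
      rw [frontier_ball _ h2, mem_sphere_zero_iff_norm] at hz
      have h3 := hC z
      rw [hz, hfg N z, norm_mul] at h3
      refine le_trans ?_ h3
      refine le_mul_of_one_le_left (norm_nonneg _) ?_
      rw [norm_prod]
      refine Finset.prod_induction _ (fun x : ℝ => 1 ≤ x)
        (fun x y hx hy => one_le_mul_of_one_le_of_one_le hx hy) le_rfl ?_
      intro k hk
      have hk' : a k < a N := amono (Finset.mem_range.1 hk)
      have h4 : 2 ≤ ‖z / a k‖ := by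
        rw [norm_div, hz, Complex.norm_real, Real.norm_of_nonneg (apos k).le, le_div_iff₀ (apos k)]
        linarith
      have h5 := norm_sub_norm_le (z / a k) 1
      rw [norm_one, norm_sub_rev] at h5
      linarith
    · rw [mem_ball_zero_iff] at hw ⊢
      linarith [apos N]
  have hL : ∀ δ : ℝ, 0 < δ → ∀ᶠ N in atTop, ∃ L : ℂ, g N w = f 0 * Complex.exp L ∧ ‖L‖ < δ := by
    intro δ hδ
    have hw0 := norm_nonneg w
    obtain ⟨ε, hε, hεδ⟩ : ∃ ε : ℝ, 0 < ε ∧ 8 * ε * ‖w‖ ≤ δ / 2 := by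
      refine ⟨δ / (16 * (‖w‖ + 1)), by positivity, ?_⟩
      rw [mul_div_assoc', div_mul_eq_mul_div, div_le_iff₀ (by positivity)]
      nlinarith
    obtain ⟨C, hC, hCb⟩ := hgr ε hε
    set K := |Real.log (C / ‖f 0‖)| with hK
    have hK0 : 0 ≤ K := abs_nonneg _
    have hf0' : 0 < ‖f 0‖ := norm_pos_iff.2 hf0
    filter_upwards [atop.eventually_gt_atTop (2 * ‖w‖),
      atop.eventually_gt_atTop (8 * K * ‖w‖ / δ)] with N h1 h2
    have haN := apos N
    obtain ⟨L, hL1, hL2⟩ := log_bound (h := g N) (M := K + ε * (2 * a N)) haN (by positivity)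
      (hg N).differentiableOn (hne N) (by
        intro w hw
        refine (hbd ε C hε hCb N w hw).trans ?_
        rw [hg0, Real.exp_add, ← mul_assoc (‖f 0‖)]
        refine mul_le_mul_of_nonneg_right ?_ (Real.exp_pos _).le
        rw [← div_le_iff₀' hf0']
        refine (Real.exp_log (by positivity : 0 < C / ‖f 0‖)).symm.le.trans ?_
        exact Real.exp_le_exp.2 (le_abs_self _)) (w := w) (by
        rw [mem_ball_zero_iff]; linarith)
    refine ⟨L, by rw [hL1, hg0], hL2.trans_lt ?_⟩
    rw [div_lt_iff₀ (by linarith)]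
    rw [div_lt_iff₀ hδ] at h2
    nlinarith [mul_le_mul_of_nonneg_right hεδ haN.le]
  have hcont : Tendsto (fun L : ℂ => f 0 * Complex.exp L) (𝓝 0) (𝓝 (f 0)) := by
    have : Continuous (fun L : ℂ => f 0 * Complex.exp L) := by fun_prop
    simpa using this.tendsto 0
  rw [Metric.tendsto_nhds]
  intro η hη
  obtain ⟨δ, hδ, hδ'⟩ := (Metric.tendsto_nhds_nhds.1 hcont) η hη
  filter_upwards [hL δ hδ] with N ⟨L, h1, h2⟩
  rw [h1]
  exact hδ' (by simpa using h2)

lemma prod_limit {f : ℂ → ℂ} (hf : Differentiable ℂ f)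
    (hgr : ∀ ε : ℝ, 0 < ε → ∃ C : ℝ, 0 < C ∧ ∀ w : ℂ, ‖f w‖ ≤ C * Real.exp (ε * ‖w‖))
    (a : ℕ → ℝ) (apos : ∀ k, 0 < a k)
    (amono : StrictMono a) (atop : Tendsto a atTop atTop) (hz : ∀ k, f (a k) = 0)
    (hs : ∀ k, deriv f (a k) ≠ 0) (hall : ∀ w, f w = 0 → ∃ k, w = a k) (i : ℕ) (x : ℝ) :
    (Multipliable fun k : {k : ℕ // k ≠ i} => (a k.1 - x) / (a k.1 - a i)) ∧
    - f x = ((a i : ℂ) - x) *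
      ((∏' k : {k : ℕ // k ≠ i}, (a k.1 - x) / (a k.1 - a i) : ℝ) : ℂ) * deriv f (a i) := by
  obtain ⟨g, hg, hfg, hlim⟩ := hadamard hf hgr a apos amono atop hz hs hall
  have hane : ∀ k, (a k : ℂ) ≠ 0 := fun k => Complex.ofReal_ne_zero.2 (apos k).ne'
  have hf0 : f 0 ≠ 0 := by
    intro h
    obtain ⟨k, hk⟩ := hall 0 h
    exact hane k hk.symm
  have hf1 : f (-1) ≠ 0 := by
    intro h
    obtain ⟨k, hk⟩ := hall _ h
    have h1 : (-1 : ℝ) = a k := by exact_mod_cast hk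
    linarith [apos k]
  have hsum : Summable (fun k => (a k)⁻¹) := by
    have hPN : ∀ N, ∏ k ∈ Finset.range N, (1 + (a k)⁻¹) = ‖f (-1) / g N (-1)‖ := by
      intro N
      have h1 := hfg N (-1)
      have h2 : g N (-1) ≠ 0 := by
        intro h
        rw [h, mul_zero] at h1
        exact hf1 h1
      rw [h1, mul_div_cancel_right₀ _ h2, norm_prod]
      refine Finset.prod_congr rfl fun k _ => ?_
      have h3 : (1 - (-1) / (a k : ℂ)) = ((1 + (a k)⁻¹ : ℝ) : ℂ) := by
        push_cast
        ring
      have := apos k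
      rw [h3, Complex.norm_real, Real.norm_of_nonneg (by positivity)]
    have ht : Tendsto (fun N => ∏ k ∈ Finset.range N, (1 + (a k)⁻¹)) atTop
        (𝓝 ‖f (-1) / f 0‖) := by
      simp_rw [hPN]
      exact (tendsto_const_nhds.div (hlim (-1)) hf0).norm
    obtain ⟨B, hB⟩ := ht.bddAbove_range
    refine summable_of_sum_range_le (c := B) (fun k => (inv_pos.2 (apos k)).le) fun N => ?_
    have h4 : ∏ k ∈ Finset.range N, (1 + (a k)⁻¹) ≤ B := hB ⟨N, rfl⟩
    refine le_trans ?_ h4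
    have : 1 + ∑ k ∈ Finset.range N, (a k)⁻¹ ≤ ∏ k ∈ Finset.range N, (1 + (a k)⁻¹) := by
      clear h4
      induction N with
      | zero => simp
      | succ N ih =>
        rw [Finset.sum_range_succ, Finset.prod_range_succ]
        have h1 := inv_pos.2 (apos N)
        have h2 : 0 ≤ ∑ k ∈ Finset.range N, (a k)⁻¹ :=
          Finset.sum_nonneg fun k _ => (inv_pos.2 (apos k)).le
        nlinarith
    linarith
  set φ : ℕ → ℝ := fun k => (a k - x) / (a k - a i) with hφ
  have hsub : ∀ k, k ≠ i → a k - a i ≠ 0 := fun k hk =>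
    sub_ne_zero.2 fun h => hk (amono.injective h)
  set s : Set ℕ := {k | k ≠ i} with hsdef
  have hind : ∀ k, s.mulIndicator φ k = 1 + (if k = i then 0 else (a i - x) / (a k - a i)) := by
    intro k
    by_cases hk : k = i
    · simp [hk, hsdef]
    · have h1 := hsub k hk
      rw [Set.mulIndicator_of_mem (by exact hk), if_neg hk, hφ]
      field_simp
      ring
  have hsumn : Summable (fun k => ‖(if k = i then 0 else (a i - x) / (a k - a i))‖) := by
    refine Summable.norm ?_
    refine Summable.of_norm_bounded_eventually_nat (g := fun k => (2 * |a i - x|) * (a k)⁻¹)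
      (hsum.mul_left _) ?_
    filter_upwards [atop.eventually_gt_atTop (2 * a i)] with k hk
    have hai := apos i
    have hak := apos k
    split_ifs with h
    · simp only [norm_zero]; positivity
    · have h1 : 0 < a k - a i := by linarith
      rw [norm_div, Real.norm_eq_abs, Real.norm_of_nonneg h1.le, div_le_iff₀ h1, mul_assoc,
        mul_comm 2, mul_assoc]
      refine le_mul_of_one_le_right (abs_nonneg _) ?_
      field_simp
      linarith
  have hmult : Multipliable (s.mulIndicator φ) := by
    have := multipliable_one_add_of_summable hsumn
    exact this.congr fun k => (hind k).symm
  have hm' : Multipliable fun k : {k : ℕ // k ≠ i} => (a k.1 - x) / (a k.1 - a i) :=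
    multipliable_subtype_iff_mulIndicator.2 hmult
  refine ⟨hm', ?_⟩
  have hT : ∏' k : {k : ℕ // k ≠ i}, (a k.1 - x) / (a k.1 - a i) = ∏' k, s.mulIndicator φ k :=
    tprod_subtype s φ
  rw [hT]
  set T := ∏' k, s.mulIndicator φ k with hTdef
  have hPt : Tendsto (fun N => ((∏ k ∈ Finset.range N, s.mulIndicator φ k : ℝ) : ℂ)) atTop
      (𝓝 (T : ℂ)) :=
    (Complex.continuous_ofReal.tendsto _).comp hmult.hasProd.tendsto_prod_nat
  have hP : ∀ N, i < N → ∏ k ∈ Finset.range N, s.mulIndicator φ k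
      = ∏ k ∈ (Finset.range N).erase i, φ k := by
    intro N hN
    rw [← Finset.mul_prod_erase _ _ (Finset.mem_range.2 hN),
      Set.mulIndicator_of_notMem (by simp [hsdef]), one_mul]
    refine Finset.prod_congr rfl fun k hk => ?_
    exact Set.mulIndicator_of_mem (show k ∈ s from Finset.ne_of_mem_erase hk) _
  have hid : ∀ᶠ N in atTop, f x * (-(1 / (a i : ℂ))) * g N (a i) =
      (1 - x / (a i : ℂ)) * ((∏ k ∈ Finset.range N, s.mulIndicator φ k : ℝ) : ℂ) * g N x *
        deriv f (a i) := by
    filter_upwards [eventually_gt_atTop i] with N hN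
    rw [hP N hN]
    have e : ∀ w : ℂ, f w =
        (1 - w / a i) * ((∏ l ∈ (Finset.range N).erase i, (1 - w / (a l : ℂ))) * g N w) := by
      intro w
      rw [hfg N w, ← mul_assoc,
        Finset.mul_prod_erase _ (fun l => 1 - w / (a l : ℂ)) (Finset.mem_range.2 hN)]
    have hD : deriv f (a i) = -(1 / (a i : ℂ)) *
        ((∏ l ∈ (Finset.range N).erase i, (1 - (a i : ℂ) / (a l : ℂ))) * g N (a i)) := by
      have d1 : HasDerivAt (fun w : ℂ => 1 - w / a i) (-(1 / (a i : ℂ))) (a i) :=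
        ((hasDerivAt_id (a i : ℂ)).div_const _).const_sub 1
      have hgN := hg N
      have d2 : DifferentiableAt ℂ (fun w : ℂ =>
        (∏ l ∈ (Finset.range N).erase i, (1 - w / (a l : ℂ))) * g N w) (a i) := by
        fun_prop
      have d3 := (d1.mul d2.hasDerivAt).deriv
      have e' : f = _ := funext e
      conv_lhs => rw [e']
      refine Eq.trans d3 ?_
      rw [div_self (hane i)]
      simp
    have hA : ∏ l ∈ (Finset.range N).erase i, (1 - (x : ℂ) / (a l : ℂ)) =
        ((∏ k ∈ (Finset.range N).erase i, φ k : ℝ) : ℂ) *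
          ∏ l ∈ (Finset.range N).erase i, (1 - (a i : ℂ) / (a l : ℂ)) := by
      rw [Complex.ofReal_prod, ← Finset.prod_mul_distrib]
      refine Finset.prod_congr rfl fun k hk => ?_
      have h1 : (a k : ℂ) - a i ≠ 0 := by
        exact_mod_cast hsub k (Finset.ne_of_mem_erase hk)
      have := hane k
      rw [hφ]
      push_cast
      field_simp
    rw [e x, hD, hA]
    ring
  have l1 := (tendsto_const_nhds (x := f x * (-(1 / (a i : ℂ))))).mul (hlim (a i))
  have l2 := (((tendsto_const_nhds (x := (1 - x / (a i : ℂ)))).mul hPt).mul (hlim x)).mul_const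
    (deriv f (a i))
  have := tendsto_nhds_unique (l1.congr' hid) l2
  have h3 := hane i
  field_simp at this
  linear_combination this

lemma mono_contra {ν : ℝ} {G p : ℝ → ℝ} {c : ℝ} (hc : c ≠ 0)
    (hG : ContinuousOn G (Set.Icc 0 1))
    (hder : ∀ t ∈ Set.Ioo (0:ℝ) 1, HasDerivAt G (c * (t ^ ν * p t)) t)
    (hp : ∀ t, 0 ≤ p t) (hpc : Continuous p) (hp0 : p 0 ≠ 0) (h01 : G 0 = G 1) : False := by
  set H : ℝ → ℝ := fun t => c⁻¹ * G t with hH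
  have hHd : ∀ t ∈ Set.Ioo (0:ℝ) 1, HasDerivAt H (t ^ ν * p t) t := by
    intro t ht
    have := (hder t ht).const_mul c⁻¹
    rwa [inv_mul_cancel_left₀ hc] at this
  have hHc : ContinuousOn H (Set.Icc 0 1) := hG.const_smul c⁻¹
  have hmono : MonotoneOn H (Set.Icc 0 1) := by
    refine monotoneOn_of_deriv_nonneg (convex_Icc 0 1) hHc ?_ ?_
    · rw [interior_Icc]
      exact fun t ht => (hHd t ht).differentiableAt.differentiableWithinAt
    · rw [interior_Icc]
      intro t ht
      rw [(hHd t ht).deriv]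
      exact mul_nonneg (Real.rpow_nonneg ht.1.le _) (hp t)
  have hconst : ∀ t ∈ Set.Ioo (0:ℝ) 1, H t = H 0 := by
    intro t ht
    have h1 := hmono (Set.left_mem_Icc.2 zero_le_one) (Set.Ioo_subset_Icc_self ht) ht.1.le
    have h2 := hmono (Set.Ioo_subset_Icc_self ht) (Set.right_mem_Icc.2 zero_le_one) ht.2.le
    have h3 : H 0 = H 1 := by simp only [hH, h01]
    linarith
  have hpz : ∀ t ∈ Set.Ioo (0:ℝ) 1, p t = 0 := by
    intro t ht
    have h1 : HasDerivAt H 0 t := by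
      refine (hasDerivAt_const t (H 0)).congr_of_eventuallyEq ?_
      filter_upwards [isOpen_Ioo.mem_nhds ht] with y hy using hconst y hy
    have h2 := (hHd t ht).unique h1
    rcases mul_eq_zero.1 h2 with h | h
    · exact absurd h (Real.rpow_pos_of_pos ht.1 _).ne'
    · exact h
  apply hp0
  have hcl : IsClosed {t | p t = 0} := isClosed_eq hpc continuous_const
  have : closure (Set.Ioo (0:ℝ) 1) ⊆ {t | p t = 0} := hcl.closure_subset_iff.2 hpz
  rw [closure_Ioo (by norm_num)] at this
  exact this (Set.left_mem_Icc.2 zero_le_one)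

lemma rpow_mul_deriv {ν : ℝ} {S : ℝ → ℝ} {S' t : ℝ} (ht : 0 < t) (h : HasDerivAt S S' t) :
    HasDerivAt (fun t => t ^ (ν + 1) * S t) (t ^ ν * ((ν + 1) * S t + t * S')) t := by
  have h1 := (Real.hasDerivAt_rpow_const (x := t) (p := ν + 1) (Or.inl ht.ne')).mul h
  convert! h1 using 1
  rw [Real.rpow_add_one ht.ne', add_sub_cancel_right]
  ring

lemma comp_deriv {ν : ℝ} (hν : -1 < ν) (a : ℂ) (t : ℝ) :
    HasDerivAt (fun t : ℝ => bF ν (a * t)) (-(a * bF (ν+1) (a * t))) t := by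
  have h1 : HasDerivAt (fun z : ℂ => bF ν (a * z)) (-(a * bF (ν+1) (a * t))) (t : ℂ) := by
    have h2 := (hasDerivAt_id (t : ℂ)).const_mul a
    have h3 := (bF_hasDerivAt hν (a * t)).comp (t : ℂ) h2
    convert! h3 using 1
    simp only [mul_one]
    ring
  exact h1.comp_ofReal

lemma hre {f : ℝ → ℂ} {f' : ℂ} {t : ℝ} (h : HasDerivAt f f' t) :
    HasDerivAt (fun t => (f t).re) f'.re t :=
  Complex.reCLM.hasFDerivAt.comp_hasDerivAt t h

lemma him {f : ℝ → ℂ} {f' : ℂ} {t : ℝ} (h : HasDerivAt f f' t) :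
    HasDerivAt (fun t => (f t).im) f'.im t :=
  Complex.imCLM.hasFDerivAt.comp_hasDerivAt t h

lemma setup {ν : ℝ} (hν : -1 < ν) (a : ℂ) : ∃ u v q : ℝ → ℂ,
    (∀ t, HasDerivAt u (v t) t) ∧ (∀ t, HasDerivAt v (q t) t) ∧
    (∀ t, t * q t + (ν + 1) * v t + a * u t = 0) ∧ (∀ t : ℝ, u t = bF ν (a * t)) ∧
    (∀ t : ℝ, v t = -(a * bF (ν+1) (a * t))) := by
  have hν1 : -1 < ν + 1 := by linarith
  refine ⟨fun t => bF ν (a * t), fun t => -(a * bF (ν+1) (a * t)),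
    fun t => -(a * (-(a * bF (ν+1+1) (a * t)))), comp_deriv hν a, fun t => ?_, fun t => ?_,
    fun t => rfl, fun t => rfl⟩
  · exact ((comp_deriv hν1 a t).const_mul a).neg
  · linear_combination a * bF_ode hν (a * t)

lemma zero_im {ν : ℝ} (hν : -1 < ν) {a : ℂ} (ha : bF ν a = 0) : a.im = 0 := by
  by_contra him0
  obtain ⟨u, v, q, hu, hv, hode, hub, -⟩ := setup hν a
  have huc : Continuous u := continuous_iff_continuousAt.2 fun t => (hu t).continuousAt
  have hvc : Continuous v := continuous_iff_continuousAt.2 fun t => (hv t).continuousAt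
  refine mono_contra (ν := ν) (c := -a.im)
    (G := fun t => t ^ (ν+1) * ((u t).re * (v t).im - (u t).im * (v t).re))
    (p := fun t => (u t).re * (u t).re + (u t).im * (u t).im) (neg_ne_zero.2 him0) ?_ ?_
    (fun t => add_nonneg (mul_self_nonneg _) (mul_self_nonneg _)) (by fun_prop) ?_ ?_
  · have := Real.continuous_rpow_const (q := ν + 1) (by linarith)
    exact Continuous.continuousOn (by fun_prop)
  · intro t ht
    have h1 := rpow_mul_deriv (ν := ν) ht.1
      (((hre (hu t)).mul (him (hv t))).sub ((him (hu t)).mul (hre (hv t))))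
    convert! h1 using 1
    have o1 := congrArg Complex.re (hode t)
    have o2 := congrArg Complex.im (hode t)
    simp at o1 o2
    simp only [Pi.mul_apply, Pi.sub_apply]
    linear_combination t ^ ν * ((u t).im * o1 - (u t).re * o2)
  · have : u 0 ≠ 0 := by
      rw [hub]
      have := bF_nonpos hν (le_refl 0)
      simpa using this
    intro h
    apply this
    have := Complex.normSq_apply (u 0)
    rw [h] at this
    exact Complex.normSq_eq_zero.1 this
  · have h1 : u 1 = 0 := by rw [hub]; simpa using ha
    have h2 : (0:ℝ) ^ (ν + 1) = 0 := Real.zero_rpow (by linarith)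
    simp [h1, h2]

lemma zero_simple {ν : ℝ} (hν : -1 < ν) {a : ℝ} (ha0 : 0 < a) (ha : bF ν a = 0) :
    bF (ν+1) a ≠ 0 := by
  intro ha1
  obtain ⟨u, v, q, hu, hv, hode, hub, hvb⟩ := setup hν a
  have huc : Continuous u := continuous_iff_continuousAt.2 fun t => (hu t).continuousAt
  have hvc : Continuous v := continuous_iff_continuousAt.2 fun t => (hv t).continuousAt
  refine mono_contra (ν := ν) (c := a)
    (G := fun t => t ^ (ν+1) * (t * ((v t).re * (v t).re) + (ν * ((u t).re * (v t).re)
      + a * ((u t).re * (u t).re))))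
    (p := fun t => (u t).re * (u t).re) ha0.ne' ?_ ?_
    (fun t => mul_self_nonneg _) (by fun_prop) ?_ ?_
  · have := Real.continuous_rpow_const (q := ν + 1) (by linarith)
    exact Continuous.continuousOn (by fun_prop)
  · intro t ht
    have du := hre (hu t)
    have dv := hre (hv t)
    have h1 := rpow_mul_deriv (ν := ν) ht.1
      (((hasDerivAt_id t).mul (dv.mul dv)).add (((du.mul dv).const_mul ν).add
        ((du.mul du).const_mul a)))
    convert! h1 using 1
    have o1 := congrArg Complex.re (hode t)
    simp at o1
    simp only [Pi.mul_apply, Pi.add_apply, id]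
    linear_combination - t ^ ν * ((2 * t * (v t).re + ν * (u t).re) * o1)
  · have : u 0 ≠ 0 := by
      rw [hub]
      have := bF_nonpos hν (le_refl 0)
      simpa using this
    intro h
    apply this
    apply Complex.ext (by simpa using h)
    rw [hub, ← Complex.ofReal_mul, bF_real, Complex.ofReal_im]
    rfl
  · have h1 : u 1 = 0 := by rw [hub]; simpa using ha
    have h3 : v 1 = 0 := by rw [hvb]; simp [ha1]
    have h2 : (0:ℝ) ^ (ν + 1) = 0 := Real.zero_rpow (by linarith)
    simp [h1, h2, h3]

/-- For the configuration of squared positive Bessel zeros,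
`J_{ν+1}(j_{ν,i}) Φ^{(ν)}(ξ_{J_ν}^{⟨2⟩}, j_{ν,i}², z²) = 2 j_{ν,i} J_ν(z)/(j_{ν,i}² − z²)`. -/
theorem weierstrass_product_bessel_zero
    (ν : ℝ) (hν : -1 < ν) (j : ℕ → ℝ)
    (hjpos : ∀ k, 0 < j k) (hjzero : ∀ k, besselJ ν (j k) = 0)
    (hjmono : StrictMono j)
    (hjall : ∀ z : ℝ, 0 < z → besselJ ν z = 0 → ∃ k, z = j k)
    (i : ℕ) (z : ℝ) (hz : 0 < z) (hzi : z ≠ j i) :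
    (Multipliable fun k : {k : ℕ // k ≠ i} =>
        ((j k.1) ^ 2 - z ^ 2) / ((j k.1) ^ 2 - (j i) ^ 2)) ∧
      besselJ (ν + 1) (j i) * (z / j i) ^ ν *
          (∏' k : {k : ℕ // k ≠ i}, ((j k.1) ^ 2 - z ^ 2) / ((j k.1) ^ 2 - (j i) ^ 2))
        = 2 * j i * besselJ ν z / ((j i) ^ 2 - z ^ 2) := by
  set a : ℕ → ℝ := fun k => j k ^ 2 / 4 with ha
  have apos : ∀ k, 0 < a k := fun k => by have := hjpos k; positivity
  have amono : StrictMono a := by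
    intro k l hkl
    have h1 := hjmono hkl
    have h2 := hjpos k
    simp only [ha]
    gcongr
  have hdiff : Differentiable ℂ (bF ν) := fun w => (bF_hasDerivAt hν w).differentiableAt
  have hJ0 : ∀ x : ℝ, 0 < x → (besselJ ν x = 0 ↔ bF ν ((x ^ 2 / 4 : ℝ) : ℂ) = 0) := by
    intro x hx
    have h1 := besselJ_eq (ν := ν) hx
    have h2 : (((x / 2) ^ ν : ℝ) : ℂ) ≠ 0 :=
      Complex.ofReal_ne_zero.2 (Real.rpow_pos_of_pos (by positivity) _).ne'
    rw [← Complex.ofReal_eq_zero, h1, mul_eq_zero, or_iff_right h2]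
  have hzero : ∀ k, bF ν (a k) = 0 := fun k => (hJ0 _ (hjpos k)).1 (hjzero k)
  have hall : ∀ w, bF ν w = 0 → ∃ k, w = a k := by
    intro w hw
    have h1 := zero_im hν hw
    obtain ⟨x, rfl⟩ : ∃ x : ℝ, w = x := ⟨w.re, Complex.ext rfl (by simpa using h1)⟩
    have hx : 0 < x := by
      by_contra h
      exact bF_nonpos hν (not_lt.1 h) hw
    have h2 : (2 * √x) ^ 2 / 4 = x := by
      rw [mul_pow, Real.sq_sqrt hx.le]; ring
    obtain ⟨k, hk⟩ := hjall (2 * √x) (by positivity) ((hJ0 _ (by positivity)).2 (by rw [h2]; exact hw))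
    refine ⟨k, ?_⟩
    simp only [ha]
    rw [← hk, h2]
  have atop : Tendsto a atTop atTop := by
    rcases tendsto_atTop_of_monotone amono.monotone with h | ⟨l, hl⟩
    · exact h
    · exfalso
      have hlt : ∀ k, a k < l := fun k =>
        (amono (Nat.lt_succ_self k)).trans_le (amono.monotone.ge_of_tendsto hl _)
      have hfr : ∃ᶠ w in 𝓝[≠] (l : ℂ), bF ν w = 0 := by
        have ht : Tendsto (fun k => (a k : ℂ)) atTop (𝓝[≠] (l : ℂ)) := by
          refine tendsto_nhdsWithin_iff.2 ⟨(Complex.continuous_ofReal.tendsto _).comp hl, ?_⟩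
          refine Eventually.of_forall fun k => ?_
          simpa using (hlt k).ne
        exact ht.frequently (Eventually.of_forall hzero).frequently
      have han : AnalyticOnNhd ℂ (bF ν) Set.univ :=
        hdiff.differentiableOn.analyticOnNhd isOpen_univ
      have h0 := han.eqOn_zero_of_preconnected_of_frequently_eq_zero isPreconnected_univ
        (Set.mem_univ _) hfr (Set.mem_univ ((0:ℝ):ℂ))
      exact bF_nonpos hν le_rfl h0
  have hderiv : ∀ w, deriv (bF ν) w = - bF (ν+1) w := fun w => (bF_hasDerivAt hν w).deriv
  have hs : ∀ k, deriv (bF ν) (a k) ≠ 0 := fun k => by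
    rw [hderiv]
    exact neg_ne_zero.2 (zero_simple hν (apos k) (hzero k))
  obtain ⟨hm, heq⟩ := prod_limit hdiff (fun ε hε => bF_growth hν hε) a apos amono atop hzero hs
    hall i (z ^ 2 / 4)
  have hfac : (fun k : {k : ℕ // k ≠ i} => (a k.1 - z ^ 2 / 4) / (a k.1 - a i)) =
      fun k : {k : ℕ // k ≠ i} => ((j k.1) ^ 2 - z ^ 2) / ((j k.1) ^ 2 - (j i) ^ 2) := by
    funext k
    simp only [ha]
    rw [← sub_div, ← sub_div, div_div_div_cancel_right₀ (by norm_num)]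
  rw [hfac] at hm heq
  refine ⟨hm, ?_⟩
  set T := ∏' k : {k : ℕ // k ≠ i}, ((j k.1) ^ 2 - z ^ 2) / ((j k.1) ^ 2 - (j i) ^ 2)
  have hji := hjpos i
  have hne : j i ^ 2 - z ^ 2 ≠ 0 := by
    intro h
    apply hzi
    have : j i ^ 2 = z ^ 2 := by linarith
    exact ((pow_left_inj₀ hji.le hz.le two_ne_zero).1 this).symm
  rw [eq_div_iff hne]
  have hr : (z / 2) ^ ν = (z / j i) ^ ν * (j i / 2) ^ ν := by
    rw [← Real.mul_rpow (by positivity) (by positivity)]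
    congr 1
    field_simp
  have hr2 : (j i / 2) ^ (ν + 1) = (j i / 2) ^ ν * (j i / 2) := Real.rpow_add_one (by positivity) _
  apply Complex.ofReal_injective
  push_cast
  rw [besselJ_eq hz, besselJ_eq hji, hr, hr2]
  rw [hderiv] at heq
  simp only [ha] at heq
  push_cast at heq ⊢
  linear_combination 2 * (((z / j i) ^ ν : ℝ) : ℂ) * (((j i / 2) ^ ν : ℝ) : ℂ) * (j i : ℂ) * heq
end
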